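/- arXiv:2212.01273 — 2 statements merged into one kernel-verified Lean document; each statement's English description precedes it below -/
import Mathlib

section
/- Let g be a finite-dimensional complex sympathetic Lie algebra admitting a simple Levi subalgebra s, and suppose the radical h = Rad(g) decomposes into exactly 4 simple s-modules, satisfying the convention that every nonzero bracket of two of these submodules equals one of them. Then dim_C g ≥ 25. -/
/-!
Let `V 0, …, V 3` be the simple modules in the radical of `g` and `s` the Levi subalgebra. Since
`g` is perfect, the radical is nilpotent, so the modules can be ordered with every bracket landing
strictly above both factors. Integer weights on the `V i` that add up along the brackets define a
derivation vanishing on `s`; it is inner and `g` has no centre, so the weights are zero. Only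
a few bracket tables survive the Jacobi identity and this rigidity.

Only `V 2` can be a trivial module, and then `V 0` has dimension `2`, so `s = sl₂`. If
`dim s ≥ 8`, each module therefore has dimension at least `4`: dimension `3` would force `s = sl₃`,
whose triality grading is incompatible with the tables. The total dimension can then only be below
`25` if all four modules have dimension `4`. But some `V i` has `[V i, V i] = V 3`,
and the `6`-dimensional module of skew tensors of `V i` has no `4`-dimensional image, since the
kernel would be `2`-dimensional, hence trivial, while Schur's lemma allows at most one invariant.

Otherwise `s = sl₂`, and every bracket is a multiple of a Clebsch–Gordan projection. Parity, the
triangle inequalities and the bound on the total dimension leave finitely many highest weights, and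
for each of them an explicit instance of the Jacobi identity fails.
-/

namespace Symp

variable (g : Type*) [LieRing g] [LieAlgebra ℂ g]

/-- A derivation of `g` is inner if it is given by the adjoint action of some element. -/
def IsInnerDer {g : Type*} [LieRing g] [LieAlgebra ℂ g] (D : LieDerivation ℂ g g) : Prop :=
  ∃ x : g, ∀ y : g, D y = ⁅x, y⁆

/-- `g` is perfect: `[g,g] = g`. -/
def IsPerfectLie : Prop :=
  ⁅(⊤ : LieIdeal ℂ g), (⊤ : LieIdeal ℂ g)⁆ = ⊤

/-- A sympathetic Lie algebra: trivial centre, perfect, all derivations inner. -/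
def IsSympathetic : Prop :=
  LieAlgebra.center ℂ g = ⊥ ∧ IsPerfectLie g ∧
    ∀ D : LieDerivation ℂ g g, IsInnerDer D

/-- `s` is a simple Levi subalgebra of `g`: it is a simple Lie algebra and a vector-space
complement to the radical. -/
def IsSimpleLevi (s : LieSubalgebra ℂ g) : Prop :=
  LieAlgebra.IsSimple ℂ s ∧
    IsCompl s.toSubmodule (LieAlgebra.radical ℂ g).toSubmodule

/-- `s` is a Levi subalgebra of `g` isomorphic to `sl₂(ℂ)`. -/
def IsSl2Levi (s : LieSubalgebra ℂ g) : Prop :=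
  Nonempty (s ≃ₗ⁅ℂ⁆ LieAlgebra.SpecialLinear.sl (Fin 2) ℂ) ∧
    IsCompl s.toSubmodule (LieAlgebra.radical ℂ g).toSubmodule

/-- The subspace spanned by all brackets `⁅x, y⁆` with `x ∈ A`, `y ∈ B`. -/
def lieSpan2 (A B : Submodule ℂ g) : Submodule ℂ g :=
  Submodule.span ℂ {z : g | ∃ x ∈ A, ∃ y ∈ B, z = ⁅x, y⁆}

/-- A subspace of `g` invariant under the bracket action of the subalgebra `s`. -/
def Invariant (s : LieSubalgebra ℂ g) (W : Submodule ℂ g) : Prop :=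
  ∀ x ∈ s, ∀ w ∈ W, ⁅x, w⁆ ∈ W

/-- `V` is an irreducible `s`-submodule of `g`. -/
def IsIrreducibleSMod (s : LieSubalgebra ℂ g) (V : Submodule ℂ g) : Prop :=
  V ≠ ⊥ ∧ Invariant g s V ∧
    ∀ W : Submodule ℂ g, W ≤ V → Invariant g s W → W = ⊥ ∨ W = V

/-- The family `V` is a decomposition of the radical of `g` into irreducible `s`-modules. -/
def IsDecomp (s : LieSubalgebra ℂ g) {k : ℕ} (V : Fin k → Submodule ℂ g) : Prop :=
  (∀ i, IsIrreducibleSMod g s (V i)) ∧ iSupIndep V ∧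
    (⨆ i, V i) = (LieAlgebra.radical ℂ g).toSubmodule

/-- The convention: any nonzero bracket of two of the modules equals one of them,
for a unique index. -/
def Convention {k : ℕ} (V : Fin k → Submodule ℂ g) : Prop :=
  ∀ i j, lieSpan2 g (V i) (V j) ≠ ⊥ → ∃! q, lieSpan2 g (V i) (V j) = V q

/-- The centre `Z(h)` of the radical `h = Rad(g)`, as a subspace of `g`. -/
def centerRad : Submodule ℂ g where
  carrier := {x | x ∈ LieAlgebra.radical ℂ g ∧ ∀ y ∈ LieAlgebra.radical ℂ g, ⁅x, y⁆ = 0}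
  add_mem' := by
    rintro a b ⟨ha, ha'⟩ ⟨hb, hb'⟩
    exact ⟨add_mem ha hb, fun y hy => by rw [add_lie, ha' y hy, hb' y hy, add_zero]⟩
  zero_mem' := ⟨zero_mem _, fun y _ => zero_lie y⟩
  smul_mem' := by
    rintro c a ⟨ha, ha'⟩
    exact ⟨SMulMemClass.smul_mem c ha, fun y hy => by rw [smul_lie, ha' y hy, smul_zero]⟩

/-- The derived subalgebra `[h,h]` of the radical `h = Rad(g)`, as a subspace of `g`. -/
def derivedRad : Submodule ℂ g :=
  lieSpan2 g (LieAlgebra.radical ℂ g).toSubmodule (LieAlgebra.radical ℂ g).toSubmodule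

end Symp

namespace Symp

open Module LieAlgebra LieAlgebra.IsKilling LieModule

/-! ### The dimension of a simple Lie algebra -/

section RootSystem

theorem finrank_eq_finrank_cartan_add_card_root {K L : Type*} [Field K] [CharZero K] [LieRing L]
    [LieAlgebra K L] [FiniteDimensional K L] [IsKilling K L] (H : LieSubalgebra K L)
    [H.IsCartanSubalgebra] [IsTriangularizable K H L] :
    finrank K L = finrank K H + H.root.card := by
  classical
  have internal := DirectSum.isInternal_submodule_of_iSupIndep_of_iSup_eq_top
    (LieSubmodule.iSupIndep_toSubmodule.mpr (iSupIndep_genWeightSpace' K H L))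
    (by rw [← LieSubmodule.iSup_toSubmodule, iSup_genWeightSpace_eq_top' K H L]; rfl)
  have finrank_sum : finrank K L = ∑ χ : Weight K H L, finrank K (genWeightSpace L χ) := by
    rw [← (LinearEquiv.ofBijective
      (DirectSum.coeLinearMap fun χ : Weight K H L ↦ (genWeightSpace L χ).toSubmodule)
      internal).finrank_eq]
    exact finrank_directSum (R := K) (M := fun χ : Weight K H L ↦ (genWeightSpace L χ).toSubmodule)
  have sum_nonzero : ∑ χ : Weight K H L with χ.IsNonZero, finrank K (genWeightSpace L χ) =
      H.root.card := by
    rw [Finset.card_eq_sum_ones]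
    exact Finset.sum_congr rfl fun χ hχ ↦ finrank_rootSpace_eq_one χ (by simpa using hχ)
  have sum_zero : ∑ χ : Weight K H L with ¬ χ.IsNonZero, finrank K (genWeightSpace L χ) =
      finrank K H := by
    rcases subsingleton_or_nontrivial L with _ | _
    · simp [finrank_zero_of_subsingleton]
    · have : ({χ : Weight K H L | ¬ χ.IsNonZero} : Finset _) = {0} := by
        ext χ
        simp [Weight.IsNonZero, Weight.isZero_iff_eq_zero]
      rw [this, Finset.sum_singleton]
      exact congrArg (fun W : Submodule K L ↦ finrank K W)
        (by rw [FunLike.coe_zero, ← coe_zeroRootSubalgebra, zeroRootSubalgebra_eq_of_is_cartan])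
  rw [finrank_sum, ← Finset.sum_filter_add_sum_filter_not _ (fun χ ↦ χ.IsNonZero), sum_nonzero,
    sum_zero, add_comm]

variable {ι K M N : Type*} [Field K] [AddCommGroup M] [Module K M]
  [AddCommGroup N] [Module K N] (P : RootPairing ι K M N)

theorem nonempty_of_nontrivial [CharZero K] [P.IsRootSystem] [Nontrivial M] : Nonempty ι := by
  by_contra h
  have := RootPairing.IsRootSystem.span_root_eq_top (P := P)
  rw [not_nonempty_iff] at h
  rw [Set.range_eq_empty, Submodule.span_empty] at this
  exact bot_ne_top this

theorem finrank_eq_one_of_root_eq_or_eq_neg [CharZero K] [P.IsRootSystem] (i : ι)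
    (h : ∀ j, P.root j = P.root i ∨ P.root j = -P.root i) : finrank K M = 1 := by
  have span_eq_top : K ∙ P.root i = ⊤ := by
    rw [eq_top_iff, ← RootPairing.IsRootSystem.span_root_eq_top (P := P), Submodule.span_le]
    rintro _ ⟨j, rfl⟩
    rcases h j with hj | hj <;> simp [hj]
  rw [← finrank_top, ← span_eq_top, finrank_span_singleton (P.ne_zero i)]

theorem card_eq_two_of_root_eq_or_eq_neg [CharZero K] [Fintype ι] (i : ι)
    (h : ∀ j, P.root j = P.root i ∨ P.root j = -P.root i) : Fintype.card ι = 2 := by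
  classical
  have root_neg : P.root (P.reflectionPerm i i) = -P.root i := by
    rw [RootPairing.root_reflectionPerm, RootPairing.reflection_apply_self]
  have univ_eq : (Finset.univ : Finset ι) = {i, P.reflectionPerm i i} := by
    ext j
    simp only [Finset.mem_univ, Finset.mem_insert, Finset.mem_singleton, true_iff]
    exact (h j).imp (P.root.injective ·) fun hj ↦ P.root.injective (hj.trans root_neg.symm)
  rw [← Finset.card_univ, univ_eq, Finset.card_pair]
  intro hi
  have : IsAddTorsionFree M := .of_isTorsionFree K M
  exact P.ne_zero i (self_eq_neg.mp
    ((congrArg P.root hi).trans root_neg))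

theorem exists_linearIndependent_pairing_ne_zero [CharZero K] [Finite ι] [P.IsIrreducible]
    [P.IsReduced] {i j : ι} (hj : P.root j ≠ P.root i) (hj' : P.root j ≠ -P.root i) :
    ∃ l, LinearIndependent K ![P.root i, P.root l] ∧ P.pairing l i ≠ 0 := by
  by_contra! h
  have mem_span {l : ι} (hl : ¬ P.IsOrthogonal l i) : P.root l ∈ K ∙ P.root i := by
    by_contra hmem
    have pairing_eq_zero : P.pairing l i = 0 := h l <| by
      rw [LinearIndependent.pair_iff' (P.ne_zero i)]
      exact fun c hc ↦ hmem (Submodule.mem_span_singleton.mpr ⟨c, hc⟩)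
    exact hl ⟨pairing_eq_zero, RootPairing.pairing_eq_zero_iff.mp pairing_eq_zero⟩
  have span_eq_top := P.span_root_image_eq_top_of_forall_orthogonal {i} (by simp) <| by
    rintro l hl i rfl
    rw [Set.image_singleton] at hl
    exact not_not.mp fun hort ↦ hl (mem_span hort)
  obtain ⟨c, hc⟩ : ∃ c : K, c • P.root i = P.root j :=
    Submodule.mem_span_singleton.mp (by rw [← Set.image_singleton, span_eq_top]; trivial)
  have indep : LinearIndependent K ![P.root i, P.root j] :=
    RootPairing.IsReduced.linearIndependent P (fun hij ↦ hj (hij ▸ rfl)) fun hij ↦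
      hj' (neg_eq_iff_eq_neg.mpr hij).symm
  exact (LinearIndependent.pair_iff' (P.ne_zero i)).mp indep c hc

theorem six_le_card_of_linearIndependent [CharZero K] [Fintype ι] {i j : ι}
    (h : LinearIndependent K ![P.root i, P.root j]) (hij : P.pairing j i ≠ 0) :
    6 ≤ Fintype.card ι := by
  -- the six roots are `±α`, `±β`, `±s_α β`
  let neg (l : ι) : ι := P.reflectionPerm l l
  have root_neg (l : ι) : P.root (neg l) = -P.root l := by
    rw [RootPairing.root_reflectionPerm, RootPairing.reflection_apply_self]
  let l := P.reflectionPerm i j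
  have root_l : P.root l = P.root j - P.pairing j i • P.root i := by
    rw [RootPairing.root_reflectionPerm, RootPairing.reflection_apply_root]
  let r : Fin 6 → ι := ![i, neg i, j, neg j, l, neg l]
  let k := P.pairing j i
  let c : Fin 6 → K × K := ![(1, 0), (-1, 0), (0, 1), (0, -1), (-k, 1), (k, -1)]
  have root_r (m : Fin 6) : P.root (r m) = (c m).1 • P.root i + (c m).2 • P.root j := by
    fin_cases m <;> simp [r, c, k, root_neg, root_l] <;> abel
  have c_injective : Function.Injective c := by
    intro m n hmn
    fin_cases m <;> fin_cases n <;> simp_all [c, k, neg_eq_self, self_eq_neg, Prod.ext_iff]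
  have r_injective : Function.Injective r := fun m n hmn ↦ c_injective <| by
    have := LinearIndependent.pair_iff.mp h ((c m).1 - (c n).1) ((c m).2 - (c n).2) <| by
      rw [sub_smul, sub_smul, sub_add_sub_comm, ← root_r, ← root_r, hmn, sub_self]
    exact Prod.ext (sub_eq_zero.mp this.1) (sub_eq_zero.mp this.2)
  simpa using Fintype.card_le_of_injective r r_injective

end RootSystem

theorem finrank_eq_three_or_eight_le (K L : Type*) [Field K] [CharZero K] [IsAlgClosed K]
    [LieRing L] [LieAlgebra K L] [FiniteDimensional K L] [IsSimple K L] :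
    (finrank K L = 3 ∧ ∃ h e f : L, IsSl2Triple h e f) ∨ 8 ≤ finrank K L := by
  classical
  have := IsSimple.nontrivial K L
  obtain ⟨x, hx⟩ := exists_isCartanSubalgebra_engel K L
  let H := LieSubalgebra.engel K x
  let P := rootSystem H
  have : Nontrivial (Dual K H) := RootPairing.IsIrreducible.nontrivial P
  obtain ⟨α⟩ : Nonempty H.root := nonempty_of_nontrivial P
  rw [finrank_eq_finrank_cartan_add_card_root H, ← Subspace.dual_finrank_eq (V := H),
    ← Fintype.card_coe]
  by_cases hα : ∀ β, P.root β = P.root α ∨ P.root β = -P.root α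
  · obtain ⟨h, e, f, hef, -⟩ := exists_isSl2Triple_of_weight_isNonZero
      (LieSubalgebra.isNonZero_coe_root α)
    left
    rw [finrank_eq_one_of_root_eq_or_eq_neg P α hα, card_eq_two_of_root_eq_or_eq_neg P α hα]
    exact ⟨rfl, h, e, f, hef⟩
  · push Not at hα
    obtain ⟨β₀, hβ₀, hβ₀'⟩ := hα
    obtain ⟨β, hβ, hort⟩ := exists_linearIndependent_pairing_ne_zero P hβ₀ hβ₀'
    have rank_le : 2 ≤ finrank K (Dual K H) := by simpa using hβ.fintype_card_le_finrank
    exact Or.inr (Nat.add_le_add rank_le (six_le_card_of_linearIndependent P hβ hort))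

/-! ### Perfect Lie algebras and their simple modules -/

section Perfect

variable {K L : Type*} [Field K] [LieRing L] [LieAlgebra K L]
  (hL : ⁅(⊤ : LieIdeal K L), (⊤ : LieIdeal K L)⁆ = ⊤)
  (M : Type*) [AddCommGroup M] [Module K M] [LieRingModule L M] [LieModule K L M]
include hL

theorem trace_toEnd_eq_zero_of_perfect (x : L) : LinearMap.trace K M (toEnd K L M x) = 0 :=
  trace_toEnd_eq_zero_of_mem_lcs K L M le_rfl (by simp [hL])

variable [CharZero K] [IsAlgClosed K] [FiniteDimensional K L] [FiniteDimensional K M]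

/-- By Lie's theorem the radical acts on some weight space by a character, and this character
vanishes because it is a multiple of the trace. -/
theorem exists_lieSubmodule_forall_radical_lie_eq_zero [Nontrivial M] :
    ∃ W : LieSubmodule K L M, W ≠ ⊥ ∧ ∀ x ∈ radical K L, ∀ w ∈ W, ⁅x, w⁆ = 0 := by
  obtain ⟨χ, hχ⟩ := exists_nontrivial_weightSpace_of_isSolvable K (radical K L) M
  let W : LieSubmodule K L M := weightSpaceOfIsLieTower K M χ
  have hW : Nontrivial W := hχ
  refine ⟨W, (LieSubmodule.nontrivial_iff_ne_bot K L M).mp hW, fun x hx w hw ↦ ?_⟩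
  have lie_eq (m : M) (hm : m ∈ W) : ⁅x, m⁆ = χ ⟨x, hx⟩ • m :=
    (mem_weightSpace (χ : radical K L → K) m).mp hm ⟨x, hx⟩
  have toEnd_eq : toEnd K L W x = χ ⟨x, hx⟩ • LinearMap.id := by
    ext m
    exact lie_eq m m.2
  have trace_eq_zero := trace_toEnd_eq_zero_of_perfect hL W x
  rw [toEnd_eq, map_smul, LinearMap.trace_id, smul_eq_mul, mul_eq_zero,
    or_iff_left (Nat.cast_ne_zero.mpr finrank_pos.ne')] at trace_eq_zero
  rw [lie_eq w hw, trace_eq_zero, zero_smul]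

theorem isNilpotent_toEnd_of_mem_radical {x : L} (hx : x ∈ radical K L) :
    IsNilpotent (toEnd K L M x) := by
  induction hn : finrank K M using Nat.strong_induction_on generalizing M with
  | _ n ih =>
  rcases subsingleton_or_nontrivial M with _ | _
  · exact ⟨1, Subsingleton.elim _ _⟩
  obtain ⟨W, hW, lie_eq_zero⟩ := exists_lieSubmodule_forall_radical_lie_eq_zero hL M
  have finrank_lt : finrank K (M ⧸ W) < n := by
    have := Submodule.finrank_quotient_add_finrank W.toSubmodule
    have : 0 < finrank K W :=
      finrank_pos_iff.mpr ((LieSubmodule.nontrivial_iff_ne_bot K L M).mpr hW)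
    change finrank K (M ⧸ W.toSubmodule) < n
    change 0 < finrank K W.toSubmodule at this
    omega
  obtain ⟨k, hk⟩ := ih _ finrank_lt (M ⧸ W) rfl
  refine ⟨k + 1, LinearMap.ext fun m ↦ ?_⟩
  have pow_mem : (toEnd K L M x ^ k) m ∈ W := by
    have := LinearMap.congr_fun (Module.End.commute_pow_left_of_commute
      (LieSubmodule.Quotient.toEnd_comp_mk' W x) k) m
    rw [hk] at this
    exact (LieSubmodule.Quotient.mk_eq_zero W).mp this.symm
  rw [pow_succ']
  exact lie_eq_zero x hx _ pow_mem

theorem isNilpotent_radical_of_perfect : LieModule.IsNilpotent (radical K L) L :=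
  (isNilpotent_iff_forall' (R := K)).mpr fun x ↦ isNilpotent_toEnd_of_mem_radical hL L x.2

end Perfect

section Depth

variable {g : Type*} [LieRing g] [LieAlgebra ℂ g]

theorem lieSpan2_le_iff {A B C : Submodule ℂ g} :
    lieSpan2 g A B ≤ C ↔ ∀ x ∈ A, ∀ y ∈ B, ⁅x, y⁆ ∈ C := by
  rw [lieSpan2, Submodule.span_le]
  exact ⟨fun h x hx y hy ↦ h ⟨x, hx, y, hy, rfl⟩, fun h z ⟨x, hx, y, hy, hz⟩ ↦ hz ▸ h x hx y hy⟩

theorem lieSpan2_comm (A B : Submodule ℂ g) : lieSpan2 g A B = lieSpan2 g B A := by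
  apply le_antisymm <;> refine lieSpan2_le_iff.mpr fun x hx y hy ↦ ?_ <;>
    rw [← lie_skew, neg_mem_iff] <;> exact lieSpan2_le_iff.mp le_rfl y hy x hx

theorem exists_le_and_not_le_succ {α : Type*} [PartialOrder α] [BoundedOrder α] {F : ℕ → α}
    (hF₀ : F 0 = ⊤) {N : ℕ} (hFN : F N = ⊥) {W : α} (hW : W ≠ ⊥) :
    ∃ k, W ≤ F k ∧ ¬ W ≤ F (k + 1) := by
  by_contra! h
  have le_F (k : ℕ) : W ≤ F k := Nat.rec (hF₀ ▸ le_top) (fun n hn ↦ h n hn) k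
  exact hW (le_bot_iff.mp (hFN ▸ le_F N))

/-- The depth of `W` is its position in the lower central series of the radical acting on `g`. -/
theorem exists_depth [FiniteDimensional ℂ g] (hg : IsPerfectLie g) {ι : Type*}
    (V : ι → Submodule ℂ g) (ne_bot : ∀ i, V i ≠ ⊥)
    (le_radical : ∀ i, V i ≤ (radical ℂ g).toSubmodule) :
    ∃ d : ι → ℕ, ∀ i j q, lieSpan2 g (V i) (V j) = V q → d i < d q ∧ d j < d q := by
  have := isNilpotent_radical_of_perfect hg
  obtain ⟨N, hN⟩ := (LieModule.isNilpotent_iff ℂ (radical ℂ g) g).mp this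
  let F (k : ℕ) : Submodule ℂ g := (lowerCentralSeries ℂ (radical ℂ g) g k).toSubmodule
  have F_antitone : Antitone F := fun a b h ↦ antitone_lowerCentralSeries ℂ (radical ℂ g) g h
  have lieSpan2_le (i : ι) {W : Submodule ℂ g} {k : ℕ} (hW : W ≤ F k) :
      lieSpan2 g (V i) W ≤ F (k + 1) := lieSpan2_le_iff.mpr fun x hx y hy ↦ by
    simp only [F, lowerCentralSeries_succ]
    exact LieSubmodule.lie_mem_lie (x := (⟨x, le_radical i hx⟩ : radical ℂ g))
      (LieSubmodule.mem_top _) (hW hy)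
  choose d le_F not_le_F using fun i ↦
    exists_le_and_not_le_succ (F := F) (by simp [F]) (show F N = ⊥ by simp [F, hN]) (ne_bot i)
  have depth_lt {i j q : ι} (h : lieSpan2 g (V i) (V j) = V q) : d j < d q := by
    by_contra! hle
    exact not_le_F q (h ▸ lieSpan2_le i ((le_F j).trans (F_antitone hle)))
  exact ⟨d, fun i j q h ↦ ⟨depth_lt (lieSpan2_comm (V i) (V j) ▸ h), depth_lt h⟩⟩

end Depth

section Representation

variable (K L M : Type*) [Field K] [LieRing L] [LieAlgebra K L]
  [AddCommGroup M] [Module K M] [LieRingModule L M] [LieModule K L M]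

theorem perfect_of_isSimple [IsSimple K L] : ⁅(⊤ : LieIdeal K L), (⊤ : LieIdeal K L)⁆ = ⊤ :=
  lie_eq_self_of_isAtom_of_nonabelian ⊤ (isAtom_iff_eq_top.mpr rfl) fun h ↦
    IsSimple.non_abelian (R := K) (L := L)
      ((lie_abelian_iff_equiv_lie_abelian (LieIdeal.topEquiv (R := K))).mp h)

variable {K L} in
theorem eq_top_of_forall_lie_mem (hL : ⁅(⊤ : LieIdeal K L), (⊤ : LieIdeal K L)⁆ = ⊤)
    {N : Submodule K L} (h : ∀ x y : L, ⁅x, y⁆ ∈ N) : N = ⊤ := by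
  rw [eq_top_iff, ← LieSubmodule.top_toSubmodule (R := K) (L := L) (M := L), ← hL,
    LieSubmodule.lieIdeal_oper_eq_linear_span', Submodule.span_le]
  rintro _ ⟨x, -, y, -, rfl⟩
  exact h x y

section Irreducible

variable [IsIrreducible K L M]

theorem maxTrivSubmodule_eq_bot_of_not_isTrivial (h : ¬ IsTrivial L M) :
    maxTrivSubmodule K L M = ⊥ :=
  (eq_bot_or_eq_top _).resolve_right fun h' ↦ h (isTrivial_iff_max_triv_eq_top K L M |>.mpr h')

omit [LieAlgebra K L] [LieModule K L M] in
theorem finrank_eq_one_of_isTrivial [IsTrivial L M] : finrank K M = 1 := by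
  have := nontrivial_of_isIrreducible K L M
  obtain ⟨v, hv⟩ := exists_ne (0 : M)
  let W : LieSubmodule K L M :=
    { K ∙ v with lie_mem := fun {x m} _ ↦ by simp [trivial_lie_zero L M x m] }
  have hW : W = ⊤ := (eq_bot_or_eq_top W).resolve_left fun h ↦ hv <| by
    have : v ∈ W := Submodule.mem_span_singleton_self v
    rwa [h, LieSubmodule.mem_bot] at this
  rw [← finrank_top, ← LieSubmodule.top_toSubmodule (R := K) (L := L) (M := M), ← hW]
  exact finrank_span_singleton hv

end Irreducible

theorem isFaithful_of_not_isTrivial [IsSimple K L] (h : ¬ IsTrivial L M) : IsFaithful K L M := by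
  rw [isFaithful_iff_ker_eq_bot]
  refine (eq_bot_or_eq_top _).resolve_right fun ker_eq_top ↦ h ⟨fun x m ↦ ?_⟩
  have : x ∈ LieModule.ker K L M := ker_eq_top ▸ LieSubmodule.mem_top x
  exact LinearMap.congr_fun this m

theorem finrank_ker_trace_add_one [CharZero K] [FiniteDimensional K M] [Nontrivial M] :
    finrank K (LinearMap.ker (LinearMap.trace K M)) + 1 = finrank K M ^ 2 := by
  have trace_ne_zero : LinearMap.trace K M ≠ 0 := fun h ↦ by
    have := LinearMap.trace_id K M
    rw [h, LinearMap.zero_apply] at this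
    exact (Nat.cast_ne_zero.mpr finrank_pos.ne') this.symm
  have := LinearMap.finrank_range_add_finrank_ker (LinearMap.trace K M)
  rw [LinearMap.range_eq_top.mpr (LinearMap.surjective_of_ne_zero trace_ne_zero), finrank_top,
    finrank_self, finrank_linearMap] at this
  rw [sq]
  omega

theorem range_toEnd_le_ker_trace (hL : ⁅(⊤ : LieIdeal K L), (⊤ : LieIdeal K L)⁆ = ⊤) :
    LinearMap.range (toEnd K L M : L →ₗ[K] End K M) ≤ LinearMap.ker (LinearMap.trace K M) := by
  rintro _ ⟨x, rfl⟩
  exact trace_toEnd_eq_zero_of_perfect hL M x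

variable [CharZero K] [FiniteDimensional K M] [Nontrivial M]
  (hL : ⁅(⊤ : LieIdeal K L), (⊤ : LieIdeal K L)⁆ = ⊤) [IsFaithful K L M]
include hL

theorem finrank_add_one_le_sq_of_isFaithful : finrank K L + 1 ≤ finrank K M ^ 2 := by
  rw [← finrank_ker_trace_add_one K M,
    ← LinearMap.finrank_range_of_inj (IsFaithful.injective_toEnd (R := K) (L := L) (M := M))]
  exact Nat.add_le_add_right (Submodule.finrank_mono (range_toEnd_le_ker_trace K L M hL)) 1

theorem range_toEnd_eq_ker_trace (h : finrank K L + 1 = finrank K M ^ 2) :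
    LinearMap.range (toEnd K L M : L →ₗ[K] End K M) = LinearMap.ker (LinearMap.trace K M) := by
  refine Submodule.eq_of_le_of_finrank_eq (range_toEnd_le_ker_trace K L M hL) ?_
  rw [LinearMap.finrank_range_of_inj (IsFaithful.injective_toEnd (R := K) (L := L) (M := M))]
  exact Nat.add_right_cancel (h.trans (finrank_ker_trace_add_one K M).symm)

end Representation

/-! ### Decompositions of the radical -/

section Decomposition

theorem iSupIndep_option_elim {ι α : Type*} [CompleteLattice α] [IsModularLattice α] {a : α}
    {f : ι → α} (hf : iSupIndep f) (ha : Disjoint a (⨆ i, f i)) :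
    iSupIndep fun o : Option ι ↦ o.elim a f
  | none => by simpa [iSup_option] using ha
  | some i => by
    have sup_le : f i ⊔ ⨆ j, ⨆ (_ : j ≠ i), f j ≤ ⨆ i, f i :=
      sup_le (le_iSup f i) (iSup₂_le fun j _ ↦ le_iSup f j)
    simpa [iSup_option, sup_comm a] using
      (hf i).disjoint_sup_right_of_disjoint_sup_left (ha.symm.mono_left sup_le)

theorem exists_linearMap_eq_on_of_isInternal {ι R M N : Type*} [DecidableEq ι] [Semiring R]
    [AddCommMonoid M] [Module R M] [AddCommMonoid N] [Module R N] {A : ι → Submodule R M}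
    (hA : DirectSum.IsInternal A) (f : ∀ i, A i →ₗ[R] N) :
    ∃ F : M →ₗ[R] N, ∀ i (x : A i), F x = f i x := by
  let e := LinearEquiv.ofBijective (DirectSum.coeLinearMap A) hA
  refine ⟨DirectSum.toModule R ι N f ∘ₗ e.symm, fun i x ↦ ?_⟩
  have : e.symm (x : M) = DirectSum.lof R ι (fun i ↦ A i) i x := by
    rw [LinearEquiv.symm_apply_eq]
    exact (DirectSum.coeLinearMap_lof A i x).symm
  simp [this]

theorem bilinear_mem_of_iSup_eq_top {ι R M N : Type*} [CommSemiring R] [AddCommMonoid M]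
    [Module R M] [AddCommMonoid N] [Module R N] {A : ι → Submodule R M} (hA : ⨆ i, A i = ⊤)
    {B : M →ₗ[R] M →ₗ[R] N} {P : Submodule R N}
    (h : ∀ i j, ∀ x ∈ A i, ∀ y ∈ A j, B x y ∈ P) (x y : M) : B x y ∈ P := by
  have map₂_le : Submodule.map₂ B (⨆ i, A i) (⨆ i, A i) ≤ P := by
    simp only [Submodule.map₂_iSup_left, Submodule.map₂_iSup_right, iSup_le_iff]
    exact fun j i ↦ Submodule.map₂_le.mpr (h i j)
  rw [hA] at map₂_le
  exact Submodule.map₂_le.mp map₂_le x trivial y trivial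

theorem derivation_rule_of_iSup_eq_top {ι R L : Type*} [CommRing R] [LieRing L] [LieAlgebra R L]
    {A : ι → Submodule R L} (hA : ⨆ i, A i = ⊤) {D : L →ₗ[R] L}
    (h : ∀ i j, ∀ x ∈ A i, ∀ y ∈ A j, D ⁅x, y⁆ = ⁅x, D y⁆ - ⁅y, D x⁆) (x y : L) :
    D ⁅x, y⁆ = ⁅x, D y⁆ - ⁅y, D x⁆ := by
  let defect : L →ₗ[R] L →ₗ[R] L := LinearMap.mk₂ R (fun x y ↦ D ⁅x, y⁆ - (⁅x, D y⁆ - ⁅y, D x⁆))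
    (fun _ _ _ ↦ by simp only [add_lie, lie_add, map_add]; abel)
    (fun _ _ _ ↦ by simp only [smul_lie, lie_smul, map_smul, smul_sub])
    (fun _ _ _ ↦ by simp only [add_lie, lie_add, map_add]; abel)
    (fun _ _ _ ↦ by simp only [smul_lie, lie_smul, map_smul, smul_sub])
  have : defect x y ∈ (⊥ : Submodule R L) := bilinear_mem_of_iSup_eq_top hA
    (fun i j x hx y hy ↦ by simp [defect, h i j x hx y hy]) x y
  exact sub_eq_zero.mp ((Submodule.mem_bot R).mp this)

variable {g : Type*} [LieRing g] [LieAlgebra ℂ g]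

theorem lie_mem_lieSpan2 {A B : Submodule ℂ g} {x y : g} (hx : x ∈ A) (hy : y ∈ B) :
    ⁅x, y⁆ ∈ lieSpan2 g A B :=
  lieSpan2_le_iff.mp le_rfl x hx y hy

theorem lie_eq_zero_of_lieSpan2_eq_bot {A B : Submodule ℂ g} (h : lieSpan2 g A B = ⊥) {x y : g}
    (hx : x ∈ A) (hy : y ∈ B) : ⁅x, y⁆ = 0 :=
  (Submodule.mem_bot ℂ).mp (h ▸ lie_mem_lieSpan2 hx hy)

theorem lieSpan2_lieSpan2_le (A B C : Submodule ℂ g) :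
    lieSpan2 g (lieSpan2 g A B) C ≤
      lieSpan2 g A (lieSpan2 g B C) ⊔ lieSpan2 g B (lieSpan2 g A C) := by
  refine lieSpan2_le_iff.mpr fun u hu z hz ↦ ?_
  induction hu using Submodule.span_induction with
  | mem u h =>
    obtain ⟨x, hx, y, hy, rfl⟩ := h
    rw [lie_lie]
    exact sub_mem (Submodule.mem_sup_left (lie_mem_lieSpan2 hx (lie_mem_lieSpan2 hy hz)))
      (Submodule.mem_sup_right (lie_mem_lieSpan2 hy (lie_mem_lieSpan2 hx hz)))
  | zero => simp
  | add u v _ _ hu hv => exact add_lie u v z ▸ add_mem hu hv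
  | smul t u _ hu => exact smul_lie t u z ▸ Submodule.smul_mem _ t hu

/-- A sympathetic Lie algebra with a simple Levi subalgebra `s` and a decomposition `V` of its
radical into simple `s`-modules satisfying the bracket convention. -/
structure IsSympatheticDecomp (s : LieSubalgebra ℂ g) {k : ℕ} (V : Fin k → Submodule ℂ g) :
    Prop where
  sympathetic : IsSympathetic g
  levi : IsSimpleLevi g s
  decomp : IsDecomp g s V
  convention : Convention g V

namespace IsSympatheticDecomp

variable {s : LieSubalgebra ℂ g} {k : ℕ} {V : Fin k → Submodule ℂ g}
  (D : IsSympatheticDecomp s V)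
include D

theorem comp_perm (σ : Equiv.Perm (Fin k)) : IsSympatheticDecomp s (V ∘ σ) where
  sympathetic := D.sympathetic
  levi := D.levi
  decomp := ⟨fun i ↦ D.decomp.1 (σ i), D.decomp.2.1.comp σ.injective,
    (σ.iSup_comp (g := V)).trans D.decomp.2.2⟩
  convention i j h := by
    obtain ⟨q, hq, q_unique⟩ := D.convention (σ i) (σ j) h
    refine ⟨σ.symm q, by simpa using hq, fun r hr ↦ ?_⟩
    rw [← q_unique (σ r) hr, σ.symm_apply_apply]

theorem ne_bot (i) : V i ≠ ⊥ := (D.decomp.1 i).1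

theorem invariant (i) : Invariant g s (V i) := (D.decomp.1 i).2.1

theorem le_radical (i) : V i ≤ (radical ℂ g).toSubmodule := D.decomp.2.2 ▸ le_iSup V i

theorem injective : Function.Injective V := D.decomp.2.1.injective D.ne_bot

theorem isInternal [DecidableEq (Option (Fin k))] :
    DirectSum.IsInternal fun o : Option (Fin k) ↦ o.elim s.toSubmodule V := by
  refine DirectSum.isInternal_submodule_of_iSupIndep_of_iSup_eq_top
    (iSupIndep_option_elim D.decomp.2.1 ?_) ?_
  · exact D.decomp.2.2 ▸ D.levi.2.disjoint
  · simpa [iSup_option, D.decomp.2.2] using D.levi.2.sup_eq_top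

theorem iSup_eq_top : ⨆ o : Option (Fin k), o.elim s.toSubmodule V = ⊤ := by
  classical exact D.isInternal.submodule_iSup_eq_top

theorem finrank_eq [FiniteDimensional ℂ g] :
    finrank ℂ g = finrank ℂ s + ∑ i, finrank ℂ (V i) := by
  classical
  rw [← (LinearEquiv.ofBijective (DirectSum.coeLinearMap _) D.isInternal).finrank_eq,
    finrank_directSum, Fintype.sum_option]
  rfl

/-- The simple `s`-module `V i`. -/
def module (i : Fin k) : LieSubmodule ℂ s g :=
  { V i with lie_mem := fun {x _} hv ↦ D.invariant i x x.2 _ hv }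

theorem isIrreducible_module (i) : IsIrreducible ℂ s (D.module i) := by
  have : Nontrivial (D.module i) := Submodule.nontrivial_iff_ne_bot.mpr (D.ne_bot i)
  refine IsIrreducible.mk fun W hW ↦ ?_
  rcases (D.decomp.1 i).2.2 (W.toSubmodule.map (D.module i).toSubmodule.subtype)
    (Submodule.map_subtype_le _ _) (by
      rintro x hx _ ⟨w, hw, rfl⟩
      exact ⟨_, W.lie_mem (x := (⟨x, hx⟩ : s)) hw, rfl⟩) with h | h
  · refine absurd ?_ hW
    rw [← LieSubmodule.toSubmodule_eq_bot]
    exact Submodule.map_injective_of_injective (Submodule.injective_subtype _)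
      (h.trans (Submodule.map_bot _).symm)
  · rw [← LieSubmodule.toSubmodule_eq_top]
    refine Submodule.map_injective_of_injective (Submodule.injective_subtype _) (h.trans ?_)
    rw [Submodule.map_subtype_top]
    rfl

theorem eq_zero_of_forall_lie_eq_zero {i} (hi : ¬ IsTrivial s (D.module i)) {v : g}
    (hv : v ∈ V i) (h : ∀ x ∈ s, ⁅x, v⁆ = 0) : v = 0 := by
  have := D.isIrreducible_module i
  have mem : (⟨v, hv⟩ : D.module i) ∈ maxTrivSubmodule ℂ s (D.module i) :=
    fun x ↦ Subtype.ext (h x x.2)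
  rw [maxTrivSubmodule_eq_bot_of_not_isTrivial ℂ s _ hi, LieSubmodule.mem_bot] at mem
  exact congrArg Subtype.val mem

theorem lie_eq_zero_of_isTrivial {i} (hi : IsTrivial s (D.module i)) {x v : g} (hx : x ∈ s)
    (hv : v ∈ V i) : ⁅x, v⁆ = 0 :=
  congrArg Subtype.val (hi.trivial ⟨x, hx⟩ ⟨v, hv⟩)

theorem lie_eq_zero_or_exists_mem {i j : Fin k} :
    (∀ x ∈ V i, ∀ y ∈ V j, ⁅x, y⁆ = 0) ∨
      ∃ q, lieSpan2 g (V i) (V j) = V q ∧ ∀ x ∈ V i, ∀ y ∈ V j, ⁅x, y⁆ ∈ V q := by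
  by_cases h : lieSpan2 g (V i) (V j) = ⊥
  · exact Or.inl fun x hx y hy ↦ lie_eq_zero_of_lieSpan2_eq_bot h hx hy
  · obtain ⟨q, hq, -⟩ := D.convention i j h
    exact Or.inr ⟨q, hq, fun x hx y hy ↦ hq ▸ lie_mem_lieSpan2 hx hy⟩

end IsSympatheticDecomp
end Decomposition

namespace IsSympatheticDecomp

variable {g : Type*} [LieRing g] [LieAlgebra ℂ g] {s : LieSubalgebra ℂ g} {k : ℕ}
  {V : Fin k → Submodule ℂ g} (D : IsSympatheticDecomp s V)
include D

section Derivation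

theorem eq_zero_of_forall_lie_eq_zero_of_mem_levi {a : g} (ha : a ∈ s) (h : ∀ y ∈ s, ⁅y, a⁆ = 0) :
    a = 0 := by
  have := D.levi.1
  have mem_center : (⟨a, ha⟩ : s) ∈ center ℂ s := fun y ↦ Subtype.ext (h y y.2)
  rw [center_eq_bot, LieSubmodule.mem_bot] at mem_center
  exact congrArg Subtype.val mem_center

theorem exists_mem_radical_forall_eq_lie {δ : g →ₗ[ℂ] g} (hs : ∀ x ∈ s, δ x = 0)
    (hV : ∀ x ∈ s, ∀ i, ∀ v ∈ V i, δ ⁅x, v⁆ = ⁅x, δ v⁆)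
    (hVV : ∀ i j, ∀ v ∈ V i, ∀ w ∈ V j, δ ⁅v, w⁆ = ⁅v, δ w⁆ - ⁅w, δ v⁆) :
    ∃ x ∈ radical ℂ g, ∀ y, δ y = ⁅x, y⁆ := by
  have derivation_rule : ∀ x y, δ ⁅x, y⁆ = ⁅x, δ y⁆ - ⁅y, δ x⁆ := by
    refine derivation_rule_of_iSup_eq_top D.iSup_eq_top ?_
    rintro (_ | i) (_ | j) x hx y hy
    · simp [hs _ hx, hs _ hy, hs _ (s.lie_mem hx hy)]
    · simp [hV x hx j y hy, hs x hx]
    · rw [← lie_skew, map_neg, hV y hy i x hx, hs y hy, lie_zero, zero_sub]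
    · exact hVV i j x hx y hy
  obtain ⟨z, hz⟩ := D.sympathetic.2.2 ⟨δ, derivation_rule⟩
  replace hz : ∀ y, δ y = ⁅z, y⁆ := hz
  obtain ⟨a, ha, r, hr, rfl⟩ := Submodule.mem_sup.mp
    (D.levi.2.sup_eq_top ▸ Submodule.mem_top : z ∈ s.toSubmodule ⊔ (radical ℂ g).toSubmodule)
  have a_eq_zero : a = 0 := by
    refine D.eq_zero_of_forall_lie_eq_zero_of_mem_levi ha fun y hy ↦ ?_
    refine Submodule.disjoint_def.mp D.levi.2.disjoint _ (s.lie_mem hy ha) ?_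
    have : ⁅y, a⁆ = -⁅y, r⁆ := by
      rw [← add_eq_zero_iff_eq_neg, ← lie_add, ← lie_skew, ← hz, hs y hy, neg_zero]
    exact this ▸ neg_mem ((radical ℂ g).lie_mem hr)
  exact ⟨r, hr, by simpa [a_eq_zero] using hz⟩

theorem weight_eq_zero [FiniteDimensional ℂ g] (w : Fin k → ℂ)
    (hw : ∀ i j q, lieSpan2 g (V i) (V j) = V q → w i + w j = w q) : w = 0 := by
  obtain ⟨δ, hδ⟩ := exists_linearMap_eq_on_of_isInternal D.isInternal
    fun o ↦ (o.elim 0 w : ℂ) • Submodule.subtype _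
  have δ_levi (x) (hx : x ∈ s) : δ x = 0 :=
    (hδ none ⟨x, hx⟩).trans (zero_smul ℂ x)
  have δ_apply {i v} (hv : v ∈ V i) : δ v = w i • v := hδ (some i) ⟨v, hv⟩
  obtain ⟨x, hx, hδx⟩ := D.exists_mem_radical_forall_eq_lie δ_levi
    (fun x hx i v hv ↦ by rw [δ_apply hv, δ_apply (D.invariant i x hx v hv), lie_smul])
    (fun i j v hv u hu ↦ by
      rw [δ_apply hv, δ_apply hu, lie_smul, lie_smul, ← lie_skew u v, smul_neg, sub_neg_eq_add,
        ← add_smul]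
      rcases D.lie_eq_zero_or_exists_mem (i := i) (j := j) with h | ⟨q, hq, lie_mem⟩
      · simp [h v hv u hu]
      · rw [δ_apply (lie_mem v hv u hu), ← hw i j q hq, add_comm])
  obtain ⟨n, hn⟩ := isNilpotent_toEnd_of_mem_radical D.sympathetic.2.1 g hx
  ext i
  obtain ⟨v, hv, hv₀⟩ := Submodule.exists_mem_ne_zero_of_ne_bot (D.ne_bot i)
  have hasEigenvector : End.HasEigenvector (toEnd ℂ g g x) (w i) v :=
    ⟨End.mem_eigenspace_iff.mpr ((hδx v).symm.trans (δ_apply hv)), hv₀⟩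
  have pow_smul := hasEigenvector.pow_apply n
  rw [hn, LinearMap.zero_apply] at pow_smul
  exact eq_zero_of_pow_eq_zero ((smul_eq_zero.mp pow_smul.symm).resolve_right hv₀)

end Derivation

section Invariants

theorem eq_zero_of_mem_radical_of_forall_lie_eq_zero (hV : ∀ i, ¬ IsTrivial s (D.module i)) {x : g}
    (hx : x ∈ radical ℂ g) (h : ∀ y ∈ s, ⁅y, x⁆ = 0) : x = 0 := by
  rw [← LieSubmodule.mem_toSubmodule, ← D.decomp.2.2] at hx
  obtain ⟨v, hv, rfl⟩ := (Submodule.mem_iSup_iff_exists_finsupp V x).mp hx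
  refine Finset.sum_eq_zero fun i hi ↦ D.eq_zero_of_forall_lie_eq_zero (hV i) (hv i) fun y hy ↦ ?_
  have lie_sum_eq_zero : ∑ j ∈ v.support, ⁅y, v j⁆ = 0 := (lie_sum _ _ _).symm.trans (h y hy)
  exact (iSupIndep_iff_finsetSum_eq_zero_imp_eq_zero V).mp D.decomp.2.1 _ _
    (fun j _ ↦ D.invariant j y hy _ (hv j)) lie_sum_eq_zero i hi

/-- Extended by zero, `φ` is a derivation of `g`. -/
theorem eq_zero_of_lieModuleHom (hV : ∀ i, ¬ IsTrivial s (D.module i)) {a d : Fin k}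
    (ha : ∀ i j, lieSpan2 g (V i) (V j) ≠ V a) (hd : ∀ i, lieSpan2 g (V i) (V d) = ⊥)
    (φ : D.module a →ₗ⁅ℂ,s⁆ D.module d) : φ = 0 := by
  let f (o : Option (Fin k)) : (o.elim s.toSubmodule V : Submodule ℂ g) →ₗ[ℂ] g :=
    if h : o = some a then
      h ▸ (D.module d).toSubmodule.subtype ∘ₗ (φ : D.module a →ₗ[ℂ] D.module d)
    else 0
  have f_of_ne {o} (ho : o ≠ some a) : f o = 0 := dif_neg ho
  obtain ⟨δ, hδ⟩ := exists_linearMap_eq_on_of_isInternal D.isInternal f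
  have δ_levi (x) (hx : x ∈ s) : δ x = 0 :=
    (hδ none ⟨x, hx⟩).trans (LinearMap.congr_fun (f_of_ne (by simp)) _)
  have δ_self {v} (hv : v ∈ V a) : δ v = φ ⟨v, hv⟩ :=
    (hδ (some a) ⟨v, hv⟩).trans (LinearMap.congr_fun (dif_pos rfl) _)
  have δ_of_ne {i v} (hi : i ≠ a) (hv : v ∈ V i) : δ v = 0 :=
    (hδ (some i) ⟨v, hv⟩).trans (LinearMap.congr_fun (f_of_ne (by simpa using hi)) _)
  have δ_mem {i v} (hv : v ∈ V i) : δ v ∈ V d := by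
    rcases eq_or_ne i a with rfl | hi
    · exact δ_self hv ▸ (φ ⟨v, hv⟩).2
    · exact δ_of_ne hi hv ▸ zero_mem _
  obtain ⟨x, hx, hδx⟩ := D.exists_mem_radical_forall_eq_lie δ_levi
    (fun x hx i v hv ↦ by
      rcases eq_or_ne i a with rfl | hi
      · rw [δ_self hv, δ_self (D.invariant i x hx v hv)]
        exact congrArg Subtype.val (φ.map_lie ⟨x, hx⟩ ⟨v, hv⟩)
      · rw [δ_of_ne hi hv, δ_of_ne hi (D.invariant i x hx v hv), lie_zero])
    (fun i j v hv w hw ↦ by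
      rw [lie_eq_zero_of_lieSpan2_eq_bot (hd i) hv (δ_mem hw),
        lie_eq_zero_of_lieSpan2_eq_bot (hd j) hw (δ_mem hv), sub_zero]
      rcases D.lie_eq_zero_or_exists_mem (i := i) (j := j) with h | ⟨q, hq, lie_mem⟩
      · rw [h v hv w hw, map_zero]
      · exact δ_of_ne (fun h ↦ ha i j (h ▸ hq)) (lie_mem v hv w hw))
  have x_eq_zero : x = 0 := D.eq_zero_of_mem_radical_of_forall_lie_eq_zero hV hx fun y hy ↦ by
    rw [← lie_skew, ← hδx, δ_levi y hy, neg_zero]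
  ext v
  rw [← δ_self v.2, hδx, x_eq_zero, zero_lie]
  rfl

/-- If `s` killed `V a`, then the other summands would contain `⁅g, g⁆ = g`. -/
theorem not_isTrivial_of_forall_lieSpan2_ne {a : Fin k}
    (ha : ∀ i j, lieSpan2 g (V i) (V j) ≠ V a) : ¬ IsTrivial s (D.module a) := by
  classical
  intro trivial
  let A (o : Option (Fin k)) : Submodule ℂ g := o.elim s.toSubmodule V
  let N : Submodule ℂ g := ⨆ o, ⨆ (_ : o ≠ some a), A o
  have le_N {o} (ho : o ≠ some a) : A o ≤ N := le_iSup₂_of_le (f := fun o _ ↦ A o) o ho le_rfl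
  have lie_mem_of_mem_levi {x y : g} (hx : x ∈ s) {j} (hy : y ∈ V j) : ⁅x, y⁆ ∈ N := by
    rcases eq_or_ne j a with rfl | hj
    · exact D.lie_eq_zero_of_isTrivial trivial hx hy ▸ zero_mem _
    · exact le_N (o := some j) (by simpa using hj) (D.invariant j x hx y hy)
  have N_eq_top : N = ⊤ := by
    refine eq_top_of_forall_lie_mem D.sympathetic.2.1 <|
      bilinear_mem_of_iSup_eq_top (B := (toEnd ℂ g g : g →ₗ[ℂ] End ℂ g)) D.iSup_eq_top ?_
    rintro (_ | i) (_ | j) x hx y hy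
    · exact le_N (o := none) (by simp) (s.lie_mem hx hy)
    · exact lie_mem_of_mem_levi hx hy
    · exact neg_mem_iff.mp (lie_skew y x ▸ lie_mem_of_mem_levi hy hx :)
    · rcases D.lie_eq_zero_or_exists_mem (i := i) (j := j) with h | ⟨q, hq, lie_mem⟩
      · simp [h x hx y hy]
      · exact le_N (o := some q) (by rintro ⟨⟩; exact ha i j hq) (lie_mem x hx y hy)
  have : Disjoint (V a) N := D.isInternal.submodule_iSupIndep (some a)
  exact D.ne_bot a (disjoint_top.mp (N_eq_top ▸ this))

theorem not_isTrivial_of_forall_lieSpan2_eq_bot {d : Fin k}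
    (hd : ∀ i, lieSpan2 g (V i) (V d) = ⊥) : ¬ IsTrivial s (D.module d) := by
  intro trivial
  obtain ⟨v, hv, hv₀⟩ := Submodule.exists_mem_ne_zero_of_ne_bot (D.ne_bot d)
  have le_ker : ⨆ o : Option (Fin k), o.elim s.toSubmodule V ≤
      LinearMap.ker ((toEnd ℂ g g : g →ₗ[ℂ] End ℂ g).flip v) := by
    refine iSup_le ?_
    rintro (_ | i) x hx
    · exact D.lie_eq_zero_of_isTrivial trivial hx hv
    · exact lie_eq_zero_of_lieSpan2_eq_bot (hd i) hx hv
  rw [D.iSup_eq_top] at le_ker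
  have : v ∈ center ℂ g := fun x ↦ le_ker (Submodule.mem_top (x := x))
  rw [D.sympathetic.1, LieSubmodule.mem_bot] at this
  exact hv₀ this

end Invariants

end IsSympatheticDecomp

/-! ### Bracket tables -/

section BracketTable

variable {k : ℕ}

/-- The bracket table of a family of submodules: the entry at `(i, j)` is the index `q` with
`⁅V i, V j⁆ = V q`, and `none` if there is no such index. -/
noncomputable def bracketTable {g : Type*} [LieRing g] [LieAlgebra ℂ g] (V : Fin k → Submodule ℂ g)
    (i j : Fin k) : Option (Fin k) :=
  open Classical in if h : ∃ q, lieSpan2 g (V i) (V j) = V q then some h.choose else none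

/-- The Jacobi identity at the level of tables: `⁅⁅V a, V b⁆, V c⁆ = V q` forces one of
`⁅V a, ⁅V b, V c⁆⁆` and `⁅V b, ⁅V a, V c⁆⁆` to be `V q`. -/
def IsJacobiTable (t : Fin k → Fin k → Option (Fin k)) : Prop :=
  ∀ a b c q, (t a b).bind (t · c) = some q →
    (t b c).bind (t a) = some q ∨ (t a c).bind (t b) = some q

/-- The weights `w` are additive along the brackets of the table `t`. -/
def IsWeightOfTable (t : Fin k → Fin k → Option (Fin k)) (w : Fin k → ℤ) : Prop :=
  ∀ i j q, t i j = some q → w i + w j = w q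

/-- The table obtained by renumbering the submodules along `σ`. -/
def permTable (σ : Equiv.Perm (Fin k)) (t : Fin k → Fin k → Option (Fin k)) (i j : Fin k) :
    Option (Fin k) :=
  (t (σ i) (σ j)).map σ.symm

instance (t : Fin k → Fin k → Option (Fin k)) : Decidable (IsJacobiTable t) := by
  unfold IsJacobiTable; infer_instance

instance (t : Fin k → Fin k → Option (Fin k)) (w : Fin k → ℤ) : Decidable (IsWeightOfTable t w) :=
  by unfold IsWeightOfTable; infer_instance

namespace IsSympatheticDecomp

variable {g : Type*} [LieRing g] [LieAlgebra ℂ g] {s : LieSubalgebra ℂ g}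
  {V : Fin k → Submodule ℂ g} (D : IsSympatheticDecomp s V)
include D

theorem option_elim_injective : Function.Injective fun o : Option (Fin k) ↦ o.elim ⊥ V
  | none, none, _ => rfl
  | none, some i, h => absurd h.symm (D.ne_bot i)
  | some i, none, h => absurd h (D.ne_bot i)
  | some _, some _, h => congrArg some (D.injective h)

theorem lieSpan2_eq_option_elim (i j : Fin k) :
    lieSpan2 g (V i) (V j) = (bracketTable V i j).elim ⊥ V := by
  unfold bracketTable
  split_ifs with h
  · exact h.choose_spec
  · by_contra ne_bot
    exact h (D.convention i j ne_bot).exists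

theorem bracketTable_eq_iff {i j : Fin k} {o : Option (Fin k)} :
    bracketTable V i j = o ↔ lieSpan2 g (V i) (V j) = o.elim ⊥ V := by
  rw [D.lieSpan2_eq_option_elim, ← D.option_elim_injective.eq_iff]

theorem bracketTable_comm (i j : Fin k) : bracketTable V i j = bracketTable V j i := by
  rw [D.bracketTable_eq_iff, lieSpan2_comm, D.lieSpan2_eq_option_elim]

theorem bracketTable_comp_perm (σ : Equiv.Perm (Fin k)) :
    bracketTable (V ∘ σ) = permTable σ (bracketTable V) := by
  funext i j
  rw [(D.comp_perm σ).bracketTable_eq_iff, permTable]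
  refine (D.lieSpan2_eq_option_elim (σ i) (σ j)).trans ?_
  cases bracketTable V (σ i) (σ j) <;> simp

theorem lieSpan2_option_elim_left (o : Option (Fin k)) (c : Fin k) :
    lieSpan2 g (o.elim ⊥ V) (V c) = (o.bind (bracketTable V · c)).elim ⊥ V := by
  cases o with
  | none => exact le_bot_iff.mp (lieSpan2_le_iff.mpr fun x hx y _ ↦ by simp_all)
  | some i => exact D.lieSpan2_eq_option_elim i c

theorem lieSpan2_option_elim_right (a : Fin k) (o : Option (Fin k)) :
    lieSpan2 g (V a) (o.elim ⊥ V) = (o.bind (bracketTable V a)).elim ⊥ V := by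
  rw [lieSpan2_comm, D.lieSpan2_option_elim_left]
  simp only [D.bracketTable_comm a]

theorem isJacobiTable_bracketTable : IsJacobiTable (bracketTable V) := by
  intro a b c q hq
  by_contra! hne
  have jacobi := lieSpan2_lieSpan2_le (V a) (V b) (V c)
  simp only [D.lieSpan2_eq_option_elim, D.lieSpan2_option_elim_left,
    D.lieSpan2_option_elim_right, hq] at jacobi
  have elim_le {o : Option (Fin k)} (ho : o ≠ some q) : o.elim ⊥ V ≤ ⨆ j, ⨆ (_ : j ≠ q), V j := by
    cases o with
    | none => exact bot_le
    | some r => exact le_iSup₂_of_le r (fun h ↦ ho (congrArg some h)) le_rfl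
  exact D.ne_bot q (disjoint_self.mp ((D.decomp.2.1 q).mono_right
    (jacobi.trans (sup_le (elim_le hne.1) (elim_le hne.2)))))

theorem exists_perm_bracketTable_lt [FiniteDimensional ℂ g] :
    ∃ σ : Equiv.Perm (Fin k), ∀ i j q, bracketTable (V ∘ σ) i j = some q → i < q ∧ j < q := by
  obtain ⟨d, hd⟩ := exists_depth D.sympathetic.2.1 V D.ne_bot D.le_radical
  have monotone := Tuple.monotone_sort d
  refine ⟨Tuple.sort d, fun i j q h ↦ ?_⟩
  obtain ⟨hi, hj⟩ := hd _ _ _ ((D.comp_perm _).bracketTable_eq_iff.mp h)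
  exact ⟨monotone.reflect_lt hi, monotone.reflect_lt hj⟩

theorem not_isWeightOfTable [FiniteDimensional ℂ g] {w : Fin k → ℤ} (hw : w ≠ 0) :
    ¬ IsWeightOfTable (bracketTable V) w := fun h ↦ hw <| by
  have := D.weight_eq_zero (fun i ↦ (w i : ℂ)) fun i j q hq ↦
    mod_cast h i j q (D.bracketTable_eq_iff.mpr hq)
  exact funext fun i ↦ Int.cast_eq_zero.mp (congrFun this i)

variable {i j q : Fin k}

theorem lieSpan2_eq_of_bracketTable_eq_some (h : bracketTable V i j = some q) :
    lieSpan2 g (V i) (V j) = V q :=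
  D.bracketTable_eq_iff.mp h

theorem lie_mem_of_bracketTable_eq_some (h : bracketTable V i j = some q) {x y : g} (hx : x ∈ V i)
    (hy : y ∈ V j) : ⁅x, y⁆ ∈ V q :=
  D.lieSpan2_eq_of_bracketTable_eq_some h ▸ lie_mem_lieSpan2 hx hy

theorem lie_eq_zero_of_bracketTable_eq_none (h : bracketTable V i j = none) {x y : g}
    (hx : x ∈ V i) (hy : y ∈ V j) : ⁅x, y⁆ = 0 :=
  lie_eq_zero_of_lieSpan2_eq_bot (D.bracketTable_eq_iff.mp h) hx hy

theorem exists_lie_ne_zero_of_bracketTable_eq_some (h : bracketTable V i j = some q) :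
    ∃ x ∈ V i, ∃ y ∈ V j, ⁅x, y⁆ ≠ 0 := by
  by_contra! lie_eq_zero
  refine D.ne_bot q (le_bot_iff.mp ?_)
  rw [← D.lieSpan2_eq_of_bracketTable_eq_some h]
  exact lieSpan2_le_iff.mpr lie_eq_zero

end IsSympatheticDecomp

/-- The first family of tables of a four-step radical, with `⁅V 0, V 0⁆ = V 2`. -/
structure IsTableA (t : Fin 4 → Fin 4 → Option (Fin 4)) : Prop where
  zero_zero : t 0 0 = some 2
  one_one : t 1 1 = some 3
  zero_one : (t 0 1 = some 3 ∧ t 1 2 = none) ∨ t 0 1 = some 2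

/-- The second family of tables of a four-step radical, with `⁅V 0, V 0⁆ = V 3`. -/
structure IsTableB (t : Fin 4 → Fin 4 → Option (Fin 4)) : Prop where
  zero_zero : t 0 0 = some 3
  zero_one : t 0 1 = some 2
  one_one : t 1 1 = some 3 ∨ (t 1 1 = none ∧ t 1 2 = some 3)

/-- Normal form of the tables without nonzero weights: `V 0` and `V 1` generate the radical
and `V 3` is central in it. -/
structure IsReducedTable (t : Fin 4 → Fin 4 → Option (Fin 4)) : Prop where
  zero_two : t 0 2 = some 3
  three (i) : t i 3 = none
  ne_zero (i j) : t i j ≠ some 0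
  ne_one (i j) : t i j ≠ some 1
  tableA_or_tableB : IsTableA t ∨ IsTableB t

section Decide

variable (t : Fin 4 → Fin 4 → Option (Fin 4))

instance : Decidable (IsTableA t) :=
  decidable_of_iff (t 0 0 = some 2 ∧ t 1 1 = some 3 ∧
      ((t 0 1 = some 3 ∧ t 1 2 = none) ∨ t 0 1 = some 2))
    ⟨fun ⟨h₁, h₂, h₃⟩ ↦ ⟨h₁, h₂, h₃⟩, fun ⟨h₁, h₂, h₃⟩ ↦ ⟨h₁, h₂, h₃⟩⟩

instance : Decidable (IsTableB t) :=
  decidable_of_iff (t 0 0 = some 3 ∧ t 0 1 = some 2 ∧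
      (t 1 1 = some 3 ∨ (t 1 1 = none ∧ t 1 2 = some 3)))
    ⟨fun ⟨h₁, h₂, h₃⟩ ↦ ⟨h₁, h₂, h₃⟩, fun ⟨h₁, h₂, h₃⟩ ↦ ⟨h₁, h₂, h₃⟩⟩

instance : Decidable (IsReducedTable t) :=
  decidable_of_iff (t 0 2 = some 3 ∧ (∀ i, t i 3 = none) ∧ (∀ i j, t i j ≠ some 0) ∧
      (∀ i j, t i j ≠ some 1) ∧ (IsTableA t ∨ IsTableB t))
    ⟨fun ⟨h₁, h₂, h₃, h₄, h₅⟩ ↦ ⟨h₁, h₂, h₃, h₄, h₅⟩,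
      fun ⟨h₁, h₂, h₃, h₄, h₅⟩ ↦ ⟨h₁, h₂, h₃, h₄, h₅⟩⟩

end Decide

/-- The symmetric table with the given entries and vanishing last row and column. -/
def symmTable (t₀₀ t₀₁ t₀₂ t₁₁ t₁₂ t₂₂ : Option (Fin 4)) : Fin 4 → Fin 4 → Option (Fin 4) :=
  ![![t₀₀, t₀₁, t₀₂, none], ![t₀₁, t₁₁, t₁₂, none], ![t₀₂, t₁₂, t₂₂, none],
    ![none, none, none, none]]

/-- The possible values above `n` of an entry of a table. -/
def entriesAbove (n : Fin 4) : List (Option (Fin 4)) :=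
  none :: ((List.finRange 4).filter (n < ·)).map some

theorem mem_entriesAbove {n : Fin 4} {o : Option (Fin 4)} (h : ∀ q, o = some q → n < q) :
    o ∈ entriesAbove n := by
  cases o <;> simp_all [entriesAbove]

/-- Every table without normal form has one of these solutions of the linear system
`w i + w j = w q` given by its entries. -/
def tableWeights : List (Fin 4 → ℤ) :=
  [![1, 1, 1, 2], ![-1, -1, -2, -2], ![1, 1, 2, 3], ![1, 2, 3, 4], ![1, 2, 2, 3],
    ![-1, -2, -1, -2], ![0, -1, -1, -2], ![1, 0, 1, 2], ![-2, -1, -2, -3], ![2, 1, 3, 4],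
    ![2, 4, 3, 6], ![2, 3, 4, 6], ![3, 2, 4, 6]]

theorem ne_zero_of_mem_tableWeights : ∀ w ∈ tableWeights, w ≠ 0 := by decide

theorem exists_weight_or_isReducedTable_symmTable :
    ∀ t₀₀ ∈ entriesAbove 0, ∀ t₀₁ ∈ entriesAbove 1, ∀ t₀₂ ∈ entriesAbove 2,
    ∀ t₁₁ ∈ entriesAbove 1, ∀ t₁₂ ∈ entriesAbove 2, ∀ t₂₂ ∈ entriesAbove 2,
    IsJacobiTable (symmTable t₀₀ t₀₁ t₀₂ t₁₁ t₁₂ t₂₂) →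
      (∃ w ∈ tableWeights, IsWeightOfTable (symmTable t₀₀ t₀₁ t₀₂ t₁₁ t₁₂ t₂₂) w) ∨
      ∃ σ ∈ [1, Equiv.swap 0 1, Equiv.swap 1 2],
        IsReducedTable (permTable σ (symmTable t₀₀ t₀₁ t₀₂ t₁₁ t₁₂ t₂₂)) := by
  decide +kernel

theorem exists_weight_or_exists_perm_isReducedTable {t : Fin 4 → Fin 4 → Option (Fin 4)}
    (comm : ∀ i j, t i j = t j i) (lt : ∀ i j q, t i j = some q → i < q ∧ j < q)
    (jacobi : IsJacobiTable t) :
    (∃ w ≠ 0, IsWeightOfTable t w) ∨ ∃ σ, IsReducedTable (permTable σ t) := by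
  have eq_none (i) : t i 3 = none := by
    by_contra! h
    obtain ⟨q, hq⟩ := Option.ne_none_iff_exists'.mp h
    exact absurd (lt i 3 q hq).2 (by omega)
  have mem (i j) : t i j ∈ entriesAbove j := mem_entriesAbove fun q h ↦ (lt i j q h).2
  have eq_symmTable : t = symmTable (t 0 0) (t 0 1) (t 0 2) (t 1 1) (t 1 2) (t 2 2) := by
    funext i j
    fin_cases i <;> fin_cases j <;> simp [symmTable, eq_none, comm 3, comm 1 0, comm 2 0, comm 2 1]
  rw [eq_symmTable] at jacobi ⊢
  exact (exists_weight_or_isReducedTable_symmTable _ (mem 0 0) _ (mem 0 1) _ (mem 0 2) _ (mem 1 1)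
    _ (mem 1 2) _ (mem 2 2) jacobi).imp (fun ⟨w, hw, h⟩ ↦ ⟨w, ne_zero_of_mem_tableWeights w hw, h⟩)
    fun ⟨σ, _, h⟩ ↦ ⟨σ, h⟩

theorem IsSympatheticDecomp.exists_perm_isReducedTable {g : Type*} [LieRing g] [LieAlgebra ℂ g]
    [FiniteDimensional ℂ g] {s : LieSubalgebra ℂ g} {V : Fin 4 → Submodule ℂ g}
    (D : IsSympatheticDecomp s V) :
    ∃ σ : Equiv.Perm (Fin 4), IsReducedTable (bracketTable (V ∘ σ)) := by
  obtain ⟨τ, lt⟩ := D.exists_perm_bracketTable_lt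
  have Dτ := D.comp_perm τ
  rcases exists_weight_or_exists_perm_isReducedTable Dτ.bracketTable_comm lt
    Dτ.isJacobiTable_bracketTable with ⟨w, hw, h⟩ | ⟨σ, h⟩
  · exact absurd h (Dτ.not_isWeightOfTable hw)
  · exact ⟨τ * σ, by rwa [← Dτ.bracketTable_comp_perm] at h⟩

end BracketTable

namespace IsSympatheticDecomp

section Dimension

variable {g : Type*} [LieRing g] [LieAlgebra ℂ g] {s : LieSubalgebra ℂ g} {k : ℕ}
  {V : Fin k → Submodule ℂ g} (D : IsSympatheticDecomp s V)
include D

theorem exists_eq_span_singleton_of_isTrivial [FiniteDimensional ℂ g] {j}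
    (hj : IsTrivial s (D.module j)) :
    ∃ c, V j = ℂ ∙ c ∧ ∀ x ∈ s, ⁅x, c⁆ = 0 := by
  have := D.isIrreducible_module j
  have finrank_eq_one : finrank ℂ (V j) = 1 := finrank_eq_one_of_isTrivial ℂ s (D.module j)
  obtain ⟨⟨c, c_mem⟩, -, span⟩ := finrank_eq_one_iff'.mp finrank_eq_one
  refine ⟨c, le_antisymm (fun v hv ↦ ?_) ((Submodule.span_singleton_le_iff_mem c _).mpr c_mem),
    fun x hx ↦ D.lie_eq_zero_of_isTrivial hj hx c_mem⟩
  obtain ⟨a, ha⟩ := span ⟨v, hv⟩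
  exact Submodule.mem_span_singleton.mpr ⟨a, congrArg Subtype.val ha⟩

theorem eq_zero_of_lie_eq_zero {i} {c x : g} (hc : ∀ y ∈ s, ⁅y, c⁆ = 0)
    (ne_zero : ∃ v ∈ V i, ⁅v, c⁆ ≠ 0) (hx : x ∈ V i) (h : ⁅x, c⁆ = 0) : x = 0 := by
  let K : Submodule ℂ g := V i ⊓ LinearMap.ker ((toEnd ℂ g g : g →ₗ[ℂ] End ℂ g).flip c)
  have mem_K : x ∈ K := ⟨hx, h⟩
  rcases (D.decomp.1 i).2.2 K inf_le_left fun y hy v hv ↦ ⟨D.invariant i y hy v hv.1, by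
    have lie_eq_zero : ⁅v, c⁆ = 0 := hv.2
    change ⁅⁅y, v⁆, c⁆ = 0
    rw [lie_lie, lie_eq_zero, hc y hy, lie_zero, lie_zero, sub_zero]⟩ with hK | hK
  · rwa [hK, Submodule.mem_bot] at mem_K
  · obtain ⟨v, hv, hvc⟩ := ne_zero
    exact absurd (hK ▸ hv : v ∈ K).2 hvc

theorem finrank_levi_add_one_le_sq [FiniteDimensional ℂ g] {i}
    (hi : ¬ IsTrivial s (D.module i)) : finrank ℂ s + 1 ≤ finrank ℂ (V i) ^ 2 := by
  have := D.levi.1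
  have := D.isIrreducible_module i
  have := nontrivial_of_isIrreducible ℂ s (D.module i)
  have := isFaithful_of_not_isTrivial ℂ s (D.module i) hi
  exact finrank_add_one_le_sq_of_isFaithful ℂ s (D.module i) (perfect_of_isSimple ℂ s)

theorem three_le_finrank_levi [FiniteDimensional ℂ g] : 3 ≤ finrank ℂ s := by
  have := D.levi.1
  rcases finrank_eq_three_or_eight_le ℂ s with h | h <;> omega

theorem two_le_finrank [FiniteDimensional ℂ g] {i} (hi : ¬ IsTrivial s (D.module i)) :
    2 ≤ finrank ℂ (V i) := by
  have := D.finrank_levi_add_one_le_sq hi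
  have := D.three_le_finrank_levi
  by_contra! h
  interval_cases finrank ℂ (V i) <;> omega

end Dimension

section ReducedTable

variable {g : Type*} [LieRing g] [LieAlgebra ℂ g] {s : LieSubalgebra ℂ g}
  {V : Fin 4 → Submodule ℂ g} (D : IsSympatheticDecomp s V)
  {c : g}
include D

theorem finrank_zero_le_two_of_isTableA [FiniteDimensional ℂ g]
    (TA : IsTableA (bracketTable V)) (hc : V 2 = ℂ ∙ c)
    (injective : ∀ x ∈ V 0, ⁅x, c⁆ = 0 → x = 0) : finrank ℂ (V 0) ≤ 2 := by
  obtain ⟨x, hx, y, hy, hxy⟩ := D.exists_lie_ne_zero_of_bracketTable_eq_some TA.zero_zero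
  have exists_smul {u v : g} (hu : u ∈ V 0) (hv : v ∈ V 0) : ∃ a : ℂ, a • c = ⁅u, v⁆ :=
    Submodule.mem_span_singleton.mp
      (hc ▸ D.lie_mem_of_bracketTable_eq_some TA.zero_zero hu hv)
  obtain ⟨a, ha⟩ := exists_smul hx hy
  have a_ne_zero : a ≠ 0 := by rintro rfl; exact hxy (by rw [← ha, zero_smul])
  have le_span : V 0 ≤ Submodule.span ℂ {x, y} := by
    intro z hz
    obtain ⟨b, hb⟩ := exists_smul hy hz
    obtain ⟨d, hd⟩ := exists_smul hz hx
    have relation : b • x + d • y + a • z = 0 := by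
      refine injective _ (add_mem (add_mem ((V 0).smul_mem _ hx) ((V 0).smul_mem _ hy))
        ((V 0).smul_mem _ hz)) ?_
      simpa [← ha, ← hb, ← hd] using lie_jacobi x y z
    refine Submodule.mem_span_pair.mpr ⟨-(a⁻¹ * b), -(a⁻¹ * d), ?_⟩
    rw [← inv_smul_smul₀ a_ne_zero z, eq_neg_of_add_eq_zero_right relation]
    module
  have finrank_span_le : finrank ℂ (Submodule.span ℂ {x, y}) ≤ 2 := by
    have := finrank_range_le_card (R := ℂ) ![x, y]
    rwa [Set.finrank, Matrix.range_cons_cons_empty] at this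
  exact (Submodule.finrank_mono le_span).trans finrank_span_le

variable (T : IsReducedTable (bracketTable V))
include T

theorem not_isTrivial_zero : ¬ IsTrivial s (D.module 0) :=
  D.not_isTrivial_of_forall_lieSpan2_ne fun i j h ↦ T.ne_zero i j (D.bracketTable_eq_iff.mpr h)

theorem not_isTrivial_one : ¬ IsTrivial s (D.module 1) :=
  D.not_isTrivial_of_forall_lieSpan2_ne fun i j h ↦ T.ne_one i j (D.bracketTable_eq_iff.mpr h)

theorem not_isTrivial_three : ¬ IsTrivial s (D.module 3) :=
  D.not_isTrivial_of_forall_lieSpan2_eq_bot fun i ↦ D.bracketTable_eq_iff.mp (T.three i)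

theorem exists_lie_ne_zero_of_eq_span (hc : V 2 = ℂ ∙ c) : ∃ v ∈ V 0, ⁅v, c⁆ ≠ 0 := by
  obtain ⟨v, hv, y, hy, hvy⟩ := D.exists_lie_ne_zero_of_bracketTable_eq_some T.zero_two
  obtain ⟨a, rfl⟩ := Submodule.mem_span_singleton.mp (hc ▸ hy)
  exact ⟨v, hv, fun h ↦ hvy (by rw [lie_smul, h, smul_zero])⟩

theorem finrank_zero_eq_finrank_three (hc : V 2 = ℂ ∙ c)
    (injective : ∀ x ∈ V 0, ⁅x, c⁆ = 0 → x = 0) : finrank ℂ (V 0) = finrank ℂ (V 3) := by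
  let φ : V 0 →ₗ[ℂ] g := ((toEnd ℂ g g : g →ₗ[ℂ] End ℂ g).flip c).domRestrict (V 0)
  have range_eq : LinearMap.range φ = V 3 := by
    have c_mem : c ∈ V 2 := hc ▸ Submodule.mem_span_singleton_self c
    refine le_antisymm ?_ ?_
    · rintro _ ⟨x, rfl⟩
      exact D.lie_mem_of_bracketTable_eq_some T.zero_two x.2 c_mem
    · rw [← D.lieSpan2_eq_of_bracketTable_eq_some T.zero_two, hc]
      refine lieSpan2_le_iff.mpr fun x hx y hy ↦ ?_
      obtain ⟨a, rfl⟩ := Submodule.mem_span_singleton.mp hy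
      exact ⟨a • ⟨x, hx⟩, by simp [φ]⟩
  rw [← range_eq, LinearMap.finrank_range_of_inj]
  exact (injective_iff_map_eq_zero φ).mpr fun x hx ↦ Subtype.ext (injective x x.2 hx)

theorem not_isTableB_of_eq_span (hc : V 2 = ℂ ∙ c)
    (injective : ∀ x ∈ V 0, ⁅x, c⁆ = 0 → x = 0) (two_le : 2 ≤ finrank ℂ (V 0)) :
    ¬ IsTableB (bracketTable V) := by
  intro TB
  obtain ⟨x, hx, y, hy, hxy⟩ := D.exists_lie_ne_zero_of_bracketTable_eq_some TB.zero_one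
  have exists_smul {u : g} (hu : u ∈ V 0) : ∃ a : ℂ, a • c = ⁅u, y⁆ :=
    Submodule.mem_span_singleton.mp (hc ▸ D.lie_mem_of_bracketTable_eq_some TB.zero_one hu hy)
  obtain ⟨a, ha⟩ := exists_smul hx
  have a_ne_zero : a ≠ 0 := by rintro rfl; exact hxy (by rw [← ha, zero_smul])
  have le_span : V 0 ≤ ℂ ∙ x := by
    intro z hz
    obtain ⟨b, hb⟩ := exists_smul hz
    have lie_lie_eq_zero : ⁅⁅x, z⁆, y⁆ = 0 := by
      rw [← lie_skew, D.lie_eq_zero_of_bracketTable_eq_none (T.three 1) hy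
        (D.lie_mem_of_bracketTable_eq_some TB.zero_zero hx hz), neg_zero]
    have relation : b • x - a • z = 0 := by
      refine injective _ (sub_mem ((V 0).smul_mem _ hx) ((V 0).smul_mem _ hz)) ?_
      simpa [lie_lie, ← ha, ← hb] using lie_lie_eq_zero
    refine Submodule.mem_span_singleton.mpr ⟨a⁻¹ * b, ?_⟩
    rw [mul_smul, sub_eq_zero.mp relation, inv_smul_smul₀ a_ne_zero]
  have := (Submodule.finrank_mono le_span).trans (finrank_span_le_card _)
  simp only [Set.toFinset_singleton, Finset.card_singleton] at this
  omega

theorem finrank_eq_two_of_isTrivial_two [FiniteDimensional ℂ g]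
    (trivial : IsTrivial s (D.module 2)) :
    finrank ℂ (V 0) = 2 ∧ finrank ℂ (V 3) = 2 ∧ IsTableA (bracketTable V) := by
  obtain ⟨c, hc, lie_eq_zero⟩ := D.exists_eq_span_singleton_of_isTrivial trivial
  have injective : ∀ x ∈ V 0, ⁅x, c⁆ = 0 → x = 0 := fun x ↦
    D.eq_zero_of_lie_eq_zero lie_eq_zero (D.exists_lie_ne_zero_of_eq_span T hc)
  have two_le := D.two_le_finrank (D.not_isTrivial_zero T)
  have eq_three := D.finrank_zero_eq_finrank_three T hc injective
  have TA := T.tableA_or_tableB.resolve_right (D.not_isTableB_of_eq_span T hc injective two_le)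
  have le_two := D.finrank_zero_le_two_of_isTableA TA hc injective
  exact ⟨by omega, by omega, TA⟩

end ReducedTable
end IsSympatheticDecomp

/-! ### Levi subalgebras of dimension at least eight -/

section AddCircle

variable {K L : Type*} [Field K] [LieRing L] [LieAlgebra K L]

/-- The sum of the eigenspaces of `ad t` whose eigenvalues represent the class `l` in `K / ℤ`. -/
def classSpace (t : L) (l : K ⧸ AddSubgroup.zmultiples (1 : K)) : Submodule K L :=
  Submodule.span K {v | ∃ μ : K, (μ : K ⧸ AddSubgroup.zmultiples (1 : K)) = l ∧ ⁅t, v⁆ = μ • v}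

variable {t : L} {l m : K ⧸ AddSubgroup.zmultiples (1 : K)}

theorem mem_classSpace_of_lie_eq_smul {v : L} {μ : K} (h : ⁅t, v⁆ = μ • v) :
    v ∈ classSpace t (μ : K ⧸ AddSubgroup.zmultiples (1 : K)) :=
  Submodule.subset_span ⟨μ, rfl, h⟩

theorem lie_mem_classSpace {x y : L} (hx : x ∈ classSpace t l) (hy : y ∈ classSpace t m) :
    ⁅x, y⁆ ∈ classSpace t (l + m) := by
  refine Submodule.span_induction₂ (p := fun x y _ _ ↦ ⁅x, y⁆ ∈ classSpace t (l + m))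
    ?_ ?_ ?_ ?_ ?_ ?_ ?_ hx hy
  · rintro x y ⟨μ, rfl, hμ⟩ ⟨ν, rfl, hν⟩
    exact mem_classSpace_of_lie_eq_smul
      (by rw [leibniz_lie, hμ, hν, smul_lie, lie_smul, ← add_smul] : ⁅t, ⁅x, y⁆⁆ = (μ + ν) • ⁅x, y⁆)
  · simp
  · simp
  · exact fun x x' y _ _ _ h h' ↦ add_lie x x' y ▸ add_mem h h'
  · exact fun x y y' _ _ _ h h' ↦ lie_add x y y' ▸ add_mem h h'
  · exact fun a x y _ _ h ↦ smul_lie a x y ▸ Submodule.smul_mem _ a h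
  · exact fun a x y _ _ h ↦ lie_smul a x y ▸ Submodule.smul_mem _ a h

theorem classSpace_le_biSup_eigenspace (t : L) (l : K ⧸ AddSubgroup.zmultiples (1 : K)) :
    classSpace t l ≤ ⨆ μ ∈ {μ : K | (μ : K ⧸ AddSubgroup.zmultiples (1 : K)) = l},
      (toEnd K L L t).eigenspace μ :=
  Submodule.span_le.mpr fun _ ⟨μ, hμ, h⟩ ↦
    Submodule.mem_iSup_of_mem μ (Submodule.mem_iSup_of_mem hμ (Module.End.mem_eigenspace_iff.mpr h))

theorem eq_of_mem_classSpace {v : L} (hv : v ≠ 0) (hl : v ∈ classSpace t l)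
    (hm : v ∈ classSpace t m) : l = m := by
  by_contra hne
  have disjoint : Disjoint {μ : K | (μ : K ⧸ AddSubgroup.zmultiples (1 : K)) = l} {μ | ↑μ = m} :=
    Set.disjoint_left.mpr fun μ hμl hμm ↦ hne (hμl.symm.trans hμm)
  have := (Module.End.eigenspaces_iSupIndep (toEnd K L L t)).disjoint_biSup_biSup disjoint
  exact hv (Submodule.disjoint_def.mp this v (classSpace_le_biSup_eigenspace t l hl)
    (classSpace_le_biSup_eigenspace t m hm))

theorem mem_classSpace_zero_of_lie_lie_lie_eq [CharZero K] {x : L}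
    (h : ⁅t, ⁅t, ⁅t, x⁆⁆⁆ = ⁅t, x⁆) :
    x ∈ classSpace t (0 : K ⧸ AddSubgroup.zmultiples (1 : K)) := by
  have mem_of_int (n : ℤ) {v : L} (hv : ⁅t, v⁆ = (n : K) • v) :
      v ∈ classSpace t (0 : K ⧸ AddSubgroup.zmultiples (1 : K)) := by
    have : ((n : K) : K ⧸ AddSubgroup.zmultiples (1 : K)) = 0 :=
      (QuotientAddGroup.eq_zero_iff _).mpr ⟨n, by simp⟩
    exact this ▸ mem_classSpace_of_lie_eq_smul hv
  have eigenvector_decomposition : x = (x - ⁅t, ⁅t, x⁆⁆) +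
      ((1 / 2 : K) • (⁅t, ⁅t, x⁆⁆ + ⁅t, x⁆) + (1 / 2 : K) • (⁅t, ⁅t, x⁆⁆ - ⁅t, x⁆)) := by
    module
  rw [eigenvector_decomposition]
  refine add_mem (mem_of_int 0 ?_) (add_mem (Submodule.smul_mem _ _ (mem_of_int 1 ?_))
    (Submodule.smul_mem _ _ (mem_of_int (-1) ?_)))
  · rw [lie_sub, h]; simp
  · rw [lie_add, h]; simp [add_comm]
  · rw [lie_sub, h]; simp

end AddCircle

section TraceZero

variable (K L M : Type*) [Field K] [CharZero K] [LieRing L] [LieAlgebra K L]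
  [AddCommGroup M] [Module K M] [LieRingModule L M] [LieModule K L M]
  [FiniteDimensional K M] [Nontrivial M]

theorem lie_lie_lie_of_isIdempotentElem {A : Type*} [Ring A] {p : A} (hp : IsIdempotentElem p)
    (a : A) : ⁅p, ⁅p, ⁅p, a⁆⁆⁆ = ⁅p, a⁆ := by
  have mul_mul_cancel (b : A) : p * (p * b) = p * b := by rw [← mul_assoc, hp]
  simp only [Ring.lie_def, mul_sub, sub_mul, mul_assoc, hp.eq, mul_mul_cancel]
  abel

/-- If `L` acts on `M` as `𝔰𝔩(M)`, the element acting as a rank one projection minus its average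
trace has `ad`-eigenvalues `0` and `±1`, and non-integral eigenvalues on `M`. -/
theorem exists_lie_lie_lie_eq_and_lie_eq_smul [IsFaithful K L M]
    (hL : ⁅(⊤ : LieIdeal K L), (⊤ : LieIdeal K L)⁆ = ⊤) (h : finrank K L + 1 = finrank K M ^ 2) :
    ∃ t : L, (∀ x : L, ⁅t, ⁅t, ⁅t, x⁆⁆⁆ = ⁅t, x⁆) ∧
      ∃ v : M, v ≠ 0 ∧ ⁅t, v⁆ = (1 - (finrank K M : K)⁻¹) • v := by
  obtain ⟨v, hv⟩ := exists_ne (0 : M)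
  obtain ⟨φ, hφ⟩ := Module.Projective.exists_dual_eq_one K hv
  let P : End K M := LinearMap.smulRight φ v
  have hP : IsIdempotentElem P := by ext; simp [P, hφ]
  have trace_eq_zero : LinearMap.trace K M (P - (finrank K M : K)⁻¹ • 1) = 0 := by
    simp [P, LinearMap.trace_smulRight, hφ, finrank_pos.ne']
  obtain ⟨t, ht⟩ := (range_toEnd_eq_ker_trace K L M hL h).ge trace_eq_zero
  replace ht : toEnd K L M t = P - (finrank K M : K)⁻¹ • 1 := ht
  have lie_toEnd (X : Module.End K M) : ⁅toEnd K L M t, X⁆ = ⁅P, X⁆ := by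
    rw [ht, Ring.lie_def, Ring.lie_def, sub_mul, mul_sub, smul_mul_assoc, mul_smul_comm, one_mul,
      mul_one, sub_sub_sub_cancel_right]
  refine ⟨t, fun x ↦ IsFaithful.injective_toEnd (R := K) (M := M) ?_, v, hv, ?_⟩
  · simpa only [LieHom.map_lie, lie_toEnd] using lie_lie_lie_of_isIdempotentElem hP _
  · rw [← toEnd_apply_apply K, ht]
    simp [P, hφ, sub_smul]

end TraceZero

theorem IsReducedTable.two_nsmul_eq_zero {t : Fin 4 → Fin 4 → Option (Fin 4)}
    (T : IsReducedTable t) {A : Type*} [AddCommGroup A] {l : Fin 4 → A}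
    (hl : ∀ i j q, t i j = some q → l i + l j = l q) (i : Fin 4) : 2 • l i = 0 := by
  have h₀₂ := hl _ _ _ T.zero_two
  rcases T.tableA_or_tableB with TA | TB
  · have h₀₀ := hl _ _ _ TA.zero_zero
    have h₁₁ := hl _ _ _ TA.one_one
    rcases TA.zero_one with ⟨h, -⟩ | h <;> have h₀₁ := hl _ _ _ h <;> fin_cases i <;> grind
  · have h₀₀ := hl _ _ _ TB.zero_zero
    have h₀₁ := hl _ _ _ TB.zero_one
    rcases TB.one_one with h | ⟨-, h⟩ <;> have h₁ := hl _ _ _ h <;> fin_cases i <;> grind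

namespace IsSympatheticDecomp

variable {g : Type*} [LieRing g] [LieAlgebra ℂ g] {s : LieSubalgebra ℂ g}

theorem exists_le_classSpace [FiniteDimensional ℂ g] {k : ℕ} {V : Fin k → Submodule ℂ g}
    (D : IsSympatheticDecomp s V) {t : g} (ht : t ∈ s)
    (h : ∀ x ∈ s, ⁅t, ⁅t, ⁅t, x⁆⁆⁆ = ⁅t, x⁆) (i : Fin k) : ∃ l, V i ≤ classSpace t l := by
  have := D.isIrreducible_module i
  have := nontrivial_of_isIrreducible ℂ s (D.module i)
  obtain ⟨μ, hμ⟩ := Module.End.exists_eigenvalue (toEnd ℂ s (D.module i) ⟨t, ht⟩)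
  obtain ⟨v, hv⟩ := hμ.exists_hasEigenvector
  have lie_eq : ⁅t, (v : g)⁆ = μ • (v : g) := congrArg Subtype.val hv.apply_eq_smul
  have invariant : Invariant g s (V i ⊓ classSpace t (μ : ℂ ⧸ AddSubgroup.zmultiples (1 : ℂ))) := by
    refine fun x hx w hw ↦ ⟨D.invariant i x hx w hw.1, ?_⟩
    have := lie_mem_classSpace (mem_classSpace_zero_of_lie_lie_lie_eq (h x hx)) hw.2
    rwa [zero_add] at this
  refine ⟨μ, ((D.decomp.1 i).2.2 _ inf_le_left invariant).elim (fun eq_bot ↦ ?_) inf_eq_left.mp⟩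
  have v_mem : (v : g) ∈ V i ⊓ classSpace t μ := ⟨v.2, mem_classSpace_of_lie_eq_smul lie_eq⟩
  rw [eq_bot, Submodule.mem_bot] at v_mem
  exact absurd (Subtype.ext v_mem) hv.2

theorem finrank_ne_three [FiniteDimensional ℂ g] {V : Fin 4 → Submodule ℂ g}
    (D : IsSympatheticDecomp s V) (T : IsReducedTable (bracketTable V)) (h : 8 ≤ finrank ℂ s)
    {j : Fin 4} (hj : ¬ IsTrivial s (D.module j)) : finrank ℂ (V j) ≠ 3 := by
  intro finrank_eq
  have := D.levi.1
  have := D.isIrreducible_module j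
  have := nontrivial_of_isIrreducible ℂ s (D.module j)
  have := isFaithful_of_not_isTrivial ℂ s (D.module j) hj
  have finrank_add_one_eq : finrank ℂ s + 1 = finrank ℂ (V j) ^ 2 :=
    le_antisymm (D.finrank_levi_add_one_le_sq hj) (by rw [finrank_eq]; omega)
  obtain ⟨t, lie_lie_lie_eq, v, hv, lie_eq⟩ : ∃ t : s, (∀ x : s, ⁅t, ⁅t, ⁅t, x⁆⁆⁆ = ⁅t, x⁆) ∧
      ∃ v : D.module j, v ≠ 0 ∧ ⁅t, v⁆ = (1 - (finrank ℂ (V j) : ℂ)⁻¹) • v :=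
    exists_lie_lie_lie_eq_and_lie_eq_smul ℂ s (D.module j) (perfect_of_isSimple ℂ s)
      finrank_add_one_eq
  choose l hl using D.exists_le_classSpace t.2 fun x hx ↦
    congrArg Subtype.val (lie_lie_lie_eq ⟨x, hx⟩)
  have add_eq (i k q) (hikq : bracketTable V i k = some q) : l i + l k = l q := by
    obtain ⟨x, hx, y, hy, hxy⟩ := D.exists_lie_ne_zero_of_bracketTable_eq_some hikq
    exact eq_of_mem_classSpace hxy (lie_mem_classSpace (hl i hx) (hl k hy))
      (hl q (D.lie_mem_of_bracketTable_eq_some hikq hx hy))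
  have two_nsmul_eq_zero := T.two_nsmul_eq_zero add_eq j
  have l_eq := eq_of_mem_classSpace (fun h ↦ hv (Subtype.ext h)) (hl j v.2)
    (mem_classSpace_of_lie_eq_smul (congrArg Subtype.val lie_eq))
  rw [l_eq, finrank_eq, ← QuotientAddGroup.mk_nsmul, QuotientAddGroup.eq_zero_iff]
    at two_nsmul_eq_zero
  obtain ⟨n, hn⟩ := two_nsmul_eq_zero
  have three_mul_eq : (3 * n : ℂ) = 4 := by
    have : (n : ℂ) = 2 * (1 - 3⁻¹) := by simpa using hn
    linear_combination 3 * this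
  have : 3 * n = 4 := mod_cast three_mul_eq
  omega

end IsSympatheticDecomp

open scoped TensorProduct

section Schur

variable {K L M N : Type*} [Field K] [IsAlgClosed K] [LieRing L] [LieAlgebra K L]
  [AddCommGroup M] [Module K M] [LieRingModule L M] [LieModule K L M] [FiniteDimensional K M]
  [AddCommGroup N] [Module K N] [LieRingModule L N] [LieModule K L N] [FiniteDimensional K N]

omit [IsAlgClosed K] [LieAlgebra K L] [LieModule K L M] in
theorem bijective_of_ne_zero_of_isIrreducible [IsIrreducible K L N]
    (finrank_eq : finrank K M = finrank K N) {φ : M →ₗ⁅K,L⁆ N} (hφ : φ ≠ 0) :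
    Function.Bijective φ := by
  have range_ne_bot : φ.range ≠ ⊥ := fun h ↦ hφ <| LieModuleHom.ext fun m ↦ by
    have : φ m ∈ φ.range := (φ.mem_range _).mpr ⟨m, rfl⟩
    rwa [h, LieSubmodule.mem_bot] at this
  have surjective : Function.Surjective (φ : M →ₗ[K] N) :=
    φ.range_eq_top.mp ((eq_bot_or_eq_top _).resolve_left range_ne_bot)
  exact ⟨(LinearMap.injective_iff_surjective_of_finrank_eq_finrank finrank_eq).mpr surjective,
    surjective⟩

omit [LieModule K L M] in
theorem exists_smul_eq_of_isIrreducible [IsIrreducible K L N]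
    (finrank_eq : finrank K M = finrank K N) {φ : M →ₗ⁅K,L⁆ N} (hφ : φ ≠ 0) (ψ : M →ₗ⁅K,L⁆ N) :
    ∃ μ : K, μ • φ = ψ := by
  have bijective := bijective_of_ne_zero_of_isIrreducible finrank_eq hφ
  let e : M ≃ₗ[K] N := LinearEquiv.ofBijective (φ : M →ₗ[K] N) bijective
  have := nontrivial_of_isIrreducible K L N
  have := e.toEquiv.nontrivial
  obtain ⟨μ, hμ⟩ := Module.End.exists_eigenvalue (e.symm.toLinearMap ∘ₗ (ψ : M →ₗ[K] N))
  obtain ⟨v, hv⟩ := hμ.exists_hasEigenvector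
  have apply_eq : ψ v = μ • φ v := by
    have := congrArg e hv.apply_eq_smul
    rwa [LinearMap.comp_apply, LinearEquiv.coe_coe, e.apply_symm_apply, map_smul] at this
  refine ⟨μ, (sub_eq_zero.mp (not_not.mp fun sub_ne_zero ↦ hv.2 ?_)).symm⟩
  refine (bijective_of_ne_zero_of_isIrreducible finrank_eq sub_ne_zero).1 ?_
  rw [LieModuleHom.sub_apply, LieModuleHom.smul_apply, apply_eq, sub_self, map_zero]

end Schur

section Contraction

variable (K L M N : Type*) [Field K] [LieRing L] [LieAlgebra K L]
  [AddCommGroup M] [Module K M] [LieRingModule L M] [LieModule K L M]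
  [AddCommGroup N] [Module K N] [LieRingModule L N] [LieModule K L N]

/-- The equivariant map sending `m ⊗ n` to `f ↦ f m • n`. -/
noncomputable def tensorContraction : M ⊗[K] N →ₗ⁅K,L⁆ Dual K M →ₗ[K] N :=
  { dualTensorHom K (Dual K M) N ∘ₗ LinearMap.rTensor N (Dual.eval K M) with
    map_lie' := by
      intro x u
      ext f
      induction u with
      | zero => simp
      | tmul m n => simp [add_comm]
      | add u v hu hv => simp_all }

variable [FiniteDimensional K M]

theorem tensorContraction_injective : Function.Injective (tensorContraction K L M N) :=
  dualTensorHom_bijective.1.comp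
    (Module.Flat.rTensor_preserves_injective_linearMap _ (evalEquiv K M).injective)

theorem finrank_maxTrivSubmodule_tensor_le_one [IsAlgClosed K] [FiniteDimensional K N]
    [IsIrreducible K L N] (finrank_eq : finrank K M = finrank K N) :
    finrank K (maxTrivSubmodule K L (M ⊗[K] N)) ≤ 1 := by
  let F : maxTrivSubmodule K L (M ⊗[K] N) →ₗ[K] Dual K M →ₗ⁅K,L⁆ N :=
    (maxTrivLinearMapEquivLieModuleHom (R := K)).toLinearMap ∘ₗ
      (maxTrivHom (tensorContraction K L M N)).toLinearMap
  have F_injective : Function.Injective F :=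
    (maxTrivLinearMapEquivLieModuleHom (R := K)).injective.comp fun _ _ h ↦
      Subtype.ext (tensorContraction_injective K L M N (congrArg Subtype.val h))
  by_cases! h : ∀ u : maxTrivSubmodule K L (M ⊗[K] N), u = 0
  · exact finrank_le_one 0 fun u ↦ ⟨0, by rw [h u, smul_zero]⟩
  obtain ⟨u, hu⟩ := h
  refine finrank_le_one u fun v ↦ ?_
  obtain ⟨μ, hμ⟩ := exists_smul_eq_of_isIrreducible (Subspace.dual_finrank_eq.trans finrank_eq)
    ((map_ne_zero_iff F F_injective).mpr hu) (F v)
  exact ⟨μ, F_injective (by rw [map_smul, hμ])⟩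

end Contraction

section Alternating

variable (K M : Type*) [Field K] [AddCommGroup M] [Module K M]

/-- The tensors `∑ (m ⊗ n - n ⊗ m)`, a model of the exterior square of `M` inside `M ⊗ M`. -/
noncomputable def skewTensors : Submodule K (M ⊗[K] M) :=
  LinearMap.range (1 - (TensorProduct.comm K M M).toLinearMap : End K (M ⊗[K] M))

variable {K M} in
theorem tmul_sub_tmul_mem_skewTensors (m n : M) : m ⊗ₜ n - n ⊗ₜ m ∈ skewTensors K M :=
  ⟨m ⊗ₜ n, by simp⟩

section Finrank

variable [FiniteDimensional K M]

theorem trace_tensorComm :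
    LinearMap.trace K (M ⊗[K] M) (TensorProduct.comm K M M).toLinearMap = finrank K M := by
  classical
  let b := finBasis K M
  rw [LinearMap.trace_eq_matrix_trace K (b.tensorProduct b)]
  simp [Matrix.trace, LinearMap.toMatrix_apply, Fintype.sum_prod_type, Finsupp.single_apply,
    ← ite_and, eq_comm]

theorem two_mul_finrank_skewTensors_add [CharZero K] :
    2 * finrank K (skewTensors K M) + finrank K M = finrank K M ^ 2 := by
  let σ : End K (M ⊗[K] M) := (TensorProduct.comm K M M).toLinearMap
  have σ_mul_self : σ * σ = 1 := LinearMap.ext fun u ↦ TensorProduct.comm_comm _ _ _ u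
  have isProj : LinearMap.IsProj (LinearMap.range (1 - σ)) ((1 / 2 : K) • (1 - σ)) := by
    refine ⟨fun u ↦ Submodule.smul_mem _ _ ⟨u, rfl⟩, ?_⟩
    rintro _ ⟨u, rfl⟩
    have : (1 - σ) * (1 - σ) = (2 : K) • (1 - σ) := by
      rw [two_smul, mul_sub, sub_mul, sub_mul, σ_mul_self, one_mul, one_mul, mul_one]
      abel
    rw [LinearMap.smul_apply, ← Module.End.mul_apply, this, LinearMap.smul_apply, smul_smul]
    norm_num
  have := isProj.trace
  rw [map_smul, map_sub, LinearMap.trace_one, trace_tensorComm, finrank_tensorProduct] at this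
  have : (2 * finrank K (LinearMap.range (1 - σ)) + finrank K M : K) = (finrank K M ^ 2 : ℕ) := by
    rw [← this]
    push_cast
    ring
  exact_mod_cast this

end Finrank

section Lie

variable {L N : Type*} [LieRing L] [LieAlgebra K L] [LieRingModule L M] [LieModule K L M]
  [AddCommGroup N] [Module K N] [LieRingModule L N] [LieModule K L N]

theorem tensorComm_lie (x : L) (u : M ⊗[K] M) :
    TensorProduct.comm K M M ⁅x, u⁆ = ⁅x, TensorProduct.comm K M M u⁆ := by
  induction u with
  | zero => simp
  | tmul m n => simp [add_comm]
  | add u v hu hv => simp [hu, hv]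

theorem lie_mem_skewTensors (x : L) {u : M ⊗[K] M} (hu : u ∈ skewTensors K M) :
    ⁅x, u⁆ ∈ skewTensors K M := by
  obtain ⟨v, rfl⟩ := hu
  exact ⟨⁅x, v⁆, by simp [tensorComm_lie]⟩

variable (L) in
theorem isTrivial_of_finrank_sq_le [IsSimple K L] [FiniteDimensional K M] [CharZero K]
    [Nontrivial M] (h : finrank K M ^ 2 ≤ finrank K L) : IsTrivial L M := by
  by_contra not_isTrivial
  have := isFaithful_of_not_isTrivial K L M not_isTrivial
  have := finrank_add_one_le_sq_of_isFaithful K L M (perfect_of_isSimple K L)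
  omega

omit [LieModule K L N] in
theorem finrank_map_skewTensors_ne_four [CharZero K] [IsAlgClosed K] [FiniteDimensional K M]
    [IsSimple K L] [IsIrreducible K L M] (hL : 4 ≤ finrank K L) (hM : finrank K M = 4)
    (Φ : M ⊗[K] M →ₗ⁅K,L⁆ N) : finrank K ((skewTensors K M).map (Φ : M ⊗[K] M →ₗ[K] N)) ≠ 4 := by
  intro h
  let W : LieSubmodule K L (M ⊗[K] M) :=
    { skewTensors K M ⊓ LinearMap.ker (Φ : M ⊗[K] M →ₗ[K] N) with
      lie_mem := fun {x u} hu ↦ ⟨lie_mem_skewTensors K M x hu.1, by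
        have : Φ u = 0 := hu.2
        simp [this]⟩ }
  have finrank_W : finrank K W = 2 := by
    have finrank_skewTensors := two_mul_finrank_skewTensors_add K M
    rw [hM] at finrank_skewTensors
    have rank_nullity := ((Φ : M ⊗[K] M →ₗ[K] N).domRestrict
      (skewTensors K M)).finrank_range_add_finrank_ker
    rw [LinearMap.range_domRestrict, h, LinearMap.ker_domRestrict,
      ← Submodule.finrank_map_subtype_eq, Submodule.map_comap_subtype] at rank_nullity
    have : finrank K W =
      finrank K ↥(skewTensors K M ⊓ LinearMap.ker (Φ : M ⊗[K] M →ₗ[K] N)) := rfl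
    omega
  have : Nontrivial W := nontrivial_of_finrank_eq_succ finrank_W
  have : IsTrivial L W := isTrivial_of_finrank_sq_le K W L (by rwa [finrank_W])
  have W_le : W ≤ maxTrivSubmodule K L (M ⊗[K] M) := fun u hu x ↦
    congrArg Subtype.val (trivial_lie_zero L W x ⟨u, hu⟩)
  have finrank_le : finrank K W ≤ finrank K (maxTrivSubmodule K L (M ⊗[K] M)) :=
    Submodule.finrank_mono W_le
  have := finrank_le.trans (finrank_maxTrivSubmodule_tensor_le_one K L M M rfl)
  exact absurd (finrank_W.symm.le.trans this) (by decide)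

end Lie

end Alternating

section Bracket

variable {g : Type*} [LieRing g] [LieAlgebra ℂ g] {s : LieSubalgebra ℂ g}

/-- The bracket of `g`, as an equivariant map on the tensor square of an `s`-submodule. -/
noncomputable def tensorBracket (A : LieSubmodule ℂ s g) : A ⊗[ℂ] A →ₗ⁅ℂ,s⁆ g :=
  { TensorProduct.lift ((toEnd ℂ g g : g →ₗ[ℂ] End ℂ g).domRestrict₁₂ A.toSubmodule A.toSubmodule)
    with
    map_lie' := by
      intro x u
      induction u with
      | zero => simp
      | tmul y z =>
        rw [TensorProduct.LieModule.lie_tmul_right]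
        exact (map_add (TensorProduct.lift _) _ _).trans (leibniz_lie (x : g) (y : g) (z : g)).symm
      | add u v hu hv => simp_all }

theorem tensorBracket_tmul (A : LieSubmodule ℂ s g) (x y : A) :
    tensorBracket A (x ⊗ₜ y) = ⁅(x : g), (y : g)⁆ := rfl

theorem map_tensorBracket_skewTensors (A : LieSubmodule ℂ s g) :
    (skewTensors ℂ A).map (tensorBracket A : A ⊗[ℂ] A →ₗ[ℂ] g) = lieSpan2 g A A := by
  apply le_antisymm
  · rintro _ ⟨u, -, rfl⟩
    induction u with
    | zero => simp
    | tmul x y => exact lie_mem_lieSpan2 x.2 y.2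
    | add u v hu hv => exact map_add (tensorBracket A : A ⊗[ℂ] A →ₗ[ℂ] g) u v ▸ add_mem hu hv
  · refine lieSpan2_le_iff.mpr fun x hx y hy ↦ ?_
    refine ⟨(1 / 2 : ℂ) • (⟨x, hx⟩ ⊗ₜ ⟨y, hy⟩ - ⟨y, hy⟩ ⊗ₜ ⟨x, hx⟩),
      Submodule.smul_mem _ _ (tmul_sub_tmul_mem_skewTensors _ _), ?_⟩
    rw [LieModuleHom.coe_toLinearMap, map_smul, map_sub, tensorBracket_tmul, tensorBracket_tmul,
      ← lie_skew y x, sub_neg_eq_add, ← two_smul ℂ, smul_smul]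
    norm_num

theorem finrank_lieSpan2_self_ne_four [IsSimple ℂ s] (h : 4 ≤ finrank ℂ s)
    (A : LieSubmodule ℂ s g) [FiniteDimensional ℂ A] [IsIrreducible ℂ s A]
    (hA : finrank ℂ A = 4) : finrank ℂ (lieSpan2 g A A) ≠ 4 := by
  rw [← map_tensorBracket_skewTensors]
  exact finrank_map_skewTensors_ne_four ℂ A h hA (tensorBracket A)

end Bracket

namespace IsSympatheticDecomp

variable {g : Type*} [LieRing g] [LieAlgebra ℂ g] {s : LieSubalgebra ℂ g} [FiniteDimensional ℂ g]

theorem finrank_ne_four_of_bracketTable_self {k : ℕ} {V : Fin k → Submodule ℂ g}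
    (D : IsSympatheticDecomp s V) (h : 4 ≤ finrank ℂ s) {i q : Fin k}
    (hiq : bracketTable V i i = some q) (hi : finrank ℂ (V i) = 4) : finrank ℂ (V q) ≠ 4 := by
  have := D.levi.1
  have := D.isIrreducible_module i
  have lieSpan2_eq : lieSpan2 g (D.module i) (D.module i) = V q :=
    D.lieSpan2_eq_of_bracketTable_eq_some hiq
  exact lieSpan2_eq ▸ finrank_lieSpan2_self_ne_four h (D.module i) hi

variable {V : Fin 4 → Submodule ℂ g}

theorem four_le_finrank (D : IsSympatheticDecomp s V) (T : IsReducedTable (bracketTable V))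
    (h : 8 ≤ finrank ℂ s) {i : Fin 4} (hi : ¬ IsTrivial s (D.module i)) : 4 ≤ finrank ℂ (V i) := by
  have le_sq := D.finrank_levi_add_one_le_sq hi
  have ne_three := D.finrank_ne_three T h hi
  by_contra! lt_four
  interval_cases finrank ℂ (V i) <;> omega

theorem twentyfive_le_finrank_of_eight_le (D : IsSympatheticDecomp s V)
    (T : IsReducedTable (bracketTable V)) (h : 8 ≤ finrank ℂ s) : 25 ≤ finrank ℂ g := by
  have h₀ := D.four_le_finrank T h (D.not_isTrivial_zero T)
  have h₁ := D.four_le_finrank T h (D.not_isTrivial_one T)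
  have h₂ := D.four_le_finrank T h (i := 2) fun trivial ↦ by
    have := (D.finrank_eq_two_of_isTrivial_two T trivial).1
    omega
  have h₃ := D.four_le_finrank T h (D.not_isTrivial_three T)
  have finrank_eq := D.finrank_eq
  rw [Fin.sum_univ_four] at finrank_eq
  by_contra! lt
  rcases T.tableA_or_tableB with TA | TB
  · exact D.finrank_ne_four_of_bracketTable_self (by omega) TA.one_one (by omega) (by omega)
  · exact D.finrank_ne_four_of_bracketTable_self (by omega) TB.zero_zero (by omega) (by omega)

end IsSympatheticDecomp

/-! ### Levi subalgebras of type `sl₂` -/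

section StringBasis

theorem toLieSubalgebra_eq_top_of_finrank_eq_three (K : Type*) {L : Type*} [Field K] [CharZero K]
    [LieRing L] [LieAlgebra K L] {h e f : L} (t : IsSl2Triple h e f) (dim : finrank K L = 3) :
    t.toLieSubalgebra K = ⊤ := by
  have := FiniteDimensional.of_finrank_pos (dim ▸ three_pos : 0 < finrank K L)
  have linInd : LinearIndependent K ![e, f, h] := by
    refine (toEnd K L L h).eigenvectors_linearIndependent' ![2, -2, 0] ?_ _ fun i ↦ ?_
    · intro i j
      fin_cases i <;> fin_cases j <;> norm_num
    · fin_cases i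
      · exact ⟨by simpa [End.mem_eigenspace_iff] using t.lie_h_e_smul K, t.e_ne_zero⟩
      · exact ⟨by simpa [End.mem_eigenspace_iff] using t.lie_lie_smul_f K, t.f_ne_zero⟩
      · exact ⟨by simp, t.h_ne_zero⟩
  rw [← LieSubalgebra.toSubmodule_inj, LieSubalgebra.top_toSubmodule,
    ← linInd.span_eq_top_of_card_eq_finrank' (by simp [dim]), Matrix.range_cons,
    Matrix.range_cons_cons_empty]
  rfl

variable {K L M N : Type*} [Field K] [LieRing L] [AddCommGroup M] [Module K M] [LieRingModule L M]
  [AddCommGroup N] [Module K N] [LieRingModule L N]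

variable (K) in
/-- `v 0, …, v n` is the standard basis `m, f • m, …, fⁿ • m` of an irreducible module of highest
weight `n` over the `sl₂`-triple `h, e, f`, continued by zeros. At `i = 0` the truncated index
`i - 1` in `lie_e` comes with the coefficient zero. -/
structure IsStringBasis (h e f : L) (n : ℕ) (v : ℕ → M) : Prop where
  ne_zero : ∀ i ≤ n, v i ≠ 0
  eq_zero : ∀ i, n < i → v i = 0
  lie_h : ∀ i : ℕ, ⁅h, v i⁆ = ((n : K) - 2 * i) • v i
  lie_f : ∀ i, ⁅f, v i⁆ = v (i + 1)
  lie_e : ∀ i : ℕ, ⁅e, v i⁆ = ((i : K) * (n + 1 - i)) • v (i - 1)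
  span_eq_top : Submodule.span K (Set.range v) = ⊤

namespace IsStringBasis

variable {h e f : L} {n : ℕ} {v : ℕ → M}

theorem span_range_fin (S : IsStringBasis K h e f n v) :
    Submodule.span K (Set.range fun i : Fin (n + 1) ↦ v i) = ⊤ := by
  rw [← top_le_iff, ← S.span_eq_top, Submodule.span_le]
  rintro _ ⟨i, rfl⟩
  rcases le_or_gt i n with hi | hi
  · exact Submodule.subset_span ⟨⟨i, by omega⟩, rfl⟩
  · rw [S.eq_zero i hi]
    exact zero_mem _

theorem exists_eq_sum (S : IsStringBasis K h e f n v) (x : M) :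
    ∃ c : Fin (n + 1) → K, ∑ i, c i • v i = x :=
  (Submodule.mem_span_range_iff_exists_fun K).mp (S.span_range_fin ▸ Submodule.mem_top)

variable [LieAlgebra K L] [LieModule K L M] [LieModule K L N]

theorem map_lie_of_map_eq {t : IsSl2Triple h e f} (htop : t.toLieSubalgebra K = ⊤)
    (S : IsStringBasis K h e f n v) {u : ℕ → N} (S' : IsStringBasis K h e f n u)
    {φ : M →ₗ[K] N} (hφ : ∀ i, φ (v i) = u i) (x : L) (m : M) : φ ⁅x, m⁆ = ⁅x, φ m⁆ := by
  obtain ⟨a, b, c, rfl⟩ := IsSl2Triple.mem_toLieSubalgebra_iff.mp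
    (htop ▸ LieSubalgebra.mem_top x : x ∈ t.toLieSubalgebra K)
  obtain ⟨d, rfl⟩ := S.exists_eq_sum m
  simp only [map_sum, map_smul, lie_sum, lie_smul, add_lie, smul_lie, map_add, t.lie_e_f, hφ,
    S.lie_h, S'.lie_h, S.lie_f, S'.lie_f, S.lie_e, S'.lie_e]

theorem const_smul (S : IsStringBasis K h e f n v) {c : K} (hc : c ≠ 0) :
    IsStringBasis K h e f n (c • v) where
  ne_zero i hi := smul_ne_zero hc (S.ne_zero i hi)
  eq_zero i hi := by rw [Pi.smul_apply, S.eq_zero i hi, smul_zero]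
  lie_h i := by rw [Pi.smul_apply, lie_smul, S.lie_h, smul_comm]
  lie_f i := by rw [Pi.smul_apply, lie_smul, S.lie_f, Pi.smul_apply]
  lie_e i := by rw [Pi.smul_apply, lie_smul, S.lie_e, smul_comm, Pi.smul_apply]
  span_eq_top := by
    rw [Pi.smul_def, Set.range_smul, Submodule.span_smul_eq_of_isUnit _ c hc.isUnit, S.span_eq_top]

variable [CharZero K]

theorem linearIndependent (S : IsStringBasis K h e f n v) :
    LinearIndependent K fun i : Fin (n + 1) ↦ v i := by
  refine (toEnd K L M h).eigenvectors_linearIndependent'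
    (fun i : Fin (n + 1) ↦ (n : K) - 2 * (i : ℕ)) ?_ _ fun i ↦ ⟨?_, S.ne_zero i (by omega)⟩
  · intro i j hij
    simpa [Fin.ext_iff] using hij
  · rw [End.mem_eigenspace_iff]
    exact S.lie_h i

theorem finrank_eq (S : IsStringBasis K h e f n v) : finrank K M = n + 1 := by
  rw [← finrank_top, ← S.span_range_fin, finrank_span_eq_card S.linearIndependent,
    Fintype.card_fin]

theorem exists_weight (S : IsStringBasis K h e f n v) {x : M} (hx : x ≠ 0) {ν : K}
    (hν : ⁅h, x⁆ = ν • x) : ∃ l ≤ n, ν = n - 2 * l ∧ ∃ c : K, x = c • v l := by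
  obtain ⟨c, rfl⟩ := S.exists_eq_sum x
  have sum_eq_zero : ∑ i : Fin (n + 1), (c i * ((n : K) - 2 * (i : ℕ) - ν)) • v i = 0 := by
    rw [lie_sum, Finset.smul_sum, ← sub_eq_zero, ← Finset.sum_sub_distrib] at hν
    rw [← hν]
    refine Finset.sum_congr rfl fun i _ ↦ ?_
    rw [lie_smul, S.lie_h]
    module
  have coeff := Fintype.linearIndependent_iff.mp S.linearIndependent _ sum_eq_zero
  obtain ⟨i, -, hi⟩ := Finset.exists_ne_zero_of_sum_ne_zero hx
  have weight_eq : ν = n - 2 * (i : ℕ) := by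
    have := (mul_eq_zero.mp (coeff i)).resolve_left fun h₀ ↦ hi (by rw [h₀, zero_smul])
    linear_combination -this
  refine ⟨i, by omega, weight_eq, c i, Finset.sum_eq_single i (fun j _ hji ↦ ?_) (by simp)⟩
  have ne : (n : K) - 2 * (j : ℕ) - ν ≠ 0 := fun h₀ ↦ hji <| Fin.ext <| by
    have : ((j : ℕ) : K) = (i : ℕ) := by linear_combination (-weight_eq - h₀) / 2
    exact_mod_cast this
  rw [(mul_eq_zero.mp (coeff j)).resolve_right ne, zero_smul]

theorem exists_eq_smul (S : IsStringBasis K h e f n v) {x : M} {l : ℕ}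
    (hx : ⁅h, x⁆ = ((n : K) - 2 * l) • x) : ∃ c : K, x = c • v l := by
  rcases eq_or_ne x 0 with rfl | hx₀
  · exact ⟨0, (zero_smul K _).symm⟩
  obtain ⟨m, -, weight_eq, c, rfl⟩ := S.exists_weight hx₀ hx
  have : (l : K) = m := by linear_combination -weight_eq / 2
  exact ⟨c, by rw [Nat.cast_injective this]⟩

theorem weight_eq_of_lie_e_eq_zero (S : IsStringBasis K h e f n v) {x : M} (hx : x ≠ 0) {ν : K}
    (hν : ⁅h, x⁆ = ν • x) (hex : ⁅e, x⁆ = 0) : ν = n := by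
  obtain ⟨l, hl, weight_eq, c, rfl⟩ := S.exists_weight hx hν
  rw [lie_smul, S.lie_e, smul_smul, smul_eq_zero] at hex
  have coeff_eq := (hex.resolve_right (S.ne_zero _ (by omega)))
  rw [mul_eq_zero, mul_eq_zero, or_iff_right (left_ne_zero_of_smul hx),
    Nat.cast_eq_zero] at coeff_eq
  have ne : (n : K) + 1 - l ≠ 0 := by
    rw [← Nat.cast_succ, sub_ne_zero, Nat.cast_injective.ne_iff]
    omega
  rw [weight_eq, coeff_eq.resolve_right ne, Nat.cast_zero, mul_zero, sub_zero]

theorem exists_lieModuleHom {t : IsSl2Triple h e f} (htop : t.toLieSubalgebra K = ⊤)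
    (S : IsStringBasis K h e f n v) {u : ℕ → N} (S' : IsStringBasis K h e f n u) :
    ∃ φ : M →ₗ⁅K,L⁆ N, ∀ i, φ (v i) = u i := by
  let B := Basis.mk S.linearIndependent S.span_range_fin.ge
  have map_eq (i : ℕ) : B.constr K (fun j : Fin (n + 1) ↦ u j) (v i) = u i := by
    rcases le_or_gt i n with hi | hi
    · simpa [B] using B.constr_basis K (fun j : Fin (n + 1) ↦ u j) ⟨i, by omega⟩
    · rw [S.eq_zero i hi, S'.eq_zero i hi, map_zero]
  exact ⟨⟨B.constr K fun j : Fin (n + 1) ↦ u j, S.map_lie_of_map_eq htop S' map_eq _ _⟩, map_eq⟩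

end IsStringBasis

variable [LieAlgebra K L] [LieModule K L M]

theorem span_range_eq_top_of_isIrreducible [IsIrreducible K L M] {h e f : L}
    {t : IsSl2Triple h e f} (htop : t.toLieSubalgebra K = ⊤) {v : ℕ → M} (hv : v 0 ≠ 0)
    {a b : ℕ → K} (lie_h : ∀ i, ⁅h, v i⁆ = a i • v i) (lie_f : ∀ i, ⁅f, v i⁆ = v (i + 1))
    (lie_e : ∀ i, ⁅e, v i⁆ = b i • v (i - 1)) : Submodule.span K (Set.range v) = ⊤ := by
  have mem (i : ℕ) : v i ∈ Submodule.span K (Set.range v) := Submodule.subset_span ⟨i, rfl⟩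
  have stable (x : L) : Submodule.span K (Set.range v) ≤
      (Submodule.span K (Set.range v)).comap (toEnd K L M x) := by
    rw [Submodule.span_le]
    rintro _ ⟨i, rfl⟩
    obtain ⟨c₁, c₂, c₃, rfl⟩ := IsSl2Triple.mem_toLieSubalgebra_iff.mp
      (htop ▸ LieSubalgebra.mem_top x : x ∈ t.toLieSubalgebra K)
    simp only [SetLike.mem_coe, Submodule.mem_comap, toEnd_apply_apply, t.lie_e_f, add_lie,
      smul_lie, lie_h, lie_f, lie_e, smul_smul]
    exact add_mem (add_mem (Submodule.smul_mem _ _ (mem _)) (Submodule.smul_mem _ _ (mem _)))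
      (Submodule.smul_mem _ _ (mem _))
  let W : LieSubmodule K L M :=
    { Submodule.span K (Set.range v) with lie_mem := fun {x _} hm ↦ stable x hm }
  have mem_W : v 0 ∈ W := mem 0
  have W_ne_bot : W ≠ ⊥ := fun h₀ ↦ hv <| (LieSubmodule.mem_bot _).mp (h₀ ▸ mem_W)
  exact congrArg LieSubmodule.toSubmodule ((eq_bot_or_eq_top W).resolve_left W_ne_bot)

theorem exists_isStringBasis [CharZero K] [IsAlgClosed K] [FiniteDimensional K M]
    [IsIrreducible K L M] {h e f : L} (t : IsSl2Triple h e f) (htop : t.toLieSubalgebra K = ⊤) :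
    ∃ (n : ℕ) (v : ℕ → M), IsStringBasis K h e f n v := by
  have := (LieSubmodule.nontrivial_iff K L M).mp inferInstance
  obtain ⟨μ, m, -, P⟩ := IsSl2Triple.exists_hasPrimitiveVectorWith (R := K) (M := M) t
  obtain ⟨n, hn⟩ := P.exists_nat
  let v (i : ℕ) : M := (toEnd K L M f ^ i) m
  have lie_h (i : ℕ) : ⁅h, v i⁆ = ((n : K) - 2 * i) • v i := hn ▸ P.lie_h_pow_toEnd_f i
  have lie_f (i : ℕ) : ⁅f, v i⁆ = v (i + 1) := P.lie_f_pow_toEnd_f i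
  have lie_e : ∀ i : ℕ, ⁅e, v i⁆ = ((i : K) * (n + 1 - i)) • v (i - 1)
    | 0 => by simpa [v] using P.lie_e
    | i + 1 => by simpa [hn] using P.lie_e_pow_succ_toEnd_f i
  have eq_zero (i : ℕ) (hi : n + 1 ≤ i) : v i = 0 := by
    induction i, hi using Nat.le_induction with
    | base => exact P.pow_toEnd_f_eq_zero_of_eq_nat hn
    | succ i _ ih => rw [← lie_f, ih, lie_zero]
  exact ⟨n, v, fun i hi ↦ P.pow_toEnd_f_ne_zero_of_eq_nat hn hi, eq_zero, lie_h, lie_f, lie_e,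
    span_range_eq_top_of_isIrreducible htop P.ne_zero lie_h lie_f lie_e⟩

end StringBasis

section ClebschGordan

/-- Clebsch–Gordan coefficients of a projection from the tensor product of the irreducible
`sl₂`-modules of highest weights `a` and `b` to that of highest weight `c = a + b - 2 * k`, in
string bases `v`, `w`, `u`: for `i + j = k + l` the pair `(v i, w j)` is sent to
`clebschGordan a b c l i j • u l`. The recursion on `l` compares the actions of `e`. -/
def clebschGordan (a b c : ℕ) : ℕ → ℕ → ℕ → ℚ
  | 0, i, _ => (-1) ^ i
  | l + 1, i, j => ((i : ℚ) * (a + 1 - i) * clebschGordan a b c l (i - 1) j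
      + (j : ℚ) * (b + 1 - j) * clebschGordan a b c l i (j - 1)) / (((l : ℚ) + 1) * (c - l))

/-- The condition that, by the Clebsch–Gordan rule, the irreducible `sl₂`-module of highest weight
`c` is the `k`-th summand of the tensor product of those of highest weights `a` and `b`. -/
structure IsClebschGordanIndex (a b c k : ℕ) : Prop where
  add_eq : a + b = c + 2 * k
  le_left : k ≤ a
  le_right : k ≤ b

variable {K L A B C : Type*} [Field K] [LieRing L] [LieAlgebra K L]
  [AddCommGroup A] [Module K A] [LieRingModule L A]
  [AddCommGroup B] [Module K B] [LieRingModule L B] [LieModule K L B]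
  [AddCommGroup C] [Module K C] [LieRingModule L C] [LieModule K L C]

/-- The equivariant pairing `φ` is, in the string bases `v`, `w`, `u` of highest weights `a`, `b`,
`c`, the Clebsch–Gordan projection to the `k`-th summand. -/
structure IsClebschGordan (φ : A →ₗ⁅K,L⁆ B →ₗ[K] C) (a b c k : ℕ) (v : ℕ → A) (w : ℕ → B)
    (u : ℕ → C) : Prop extends IsClebschGordanIndex a b c k where
  apply_eq_zero : ∀ i j, i + j < k → φ (v i) (w j) = 0
  apply_eq_smul : ∀ l ≤ c, ∀ i j, i + j = k + l →
    φ (v i) (w j) = (clebschGordan a b c l i j : K) • u l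

theorem lie_apply_apply (φ : A →ₗ⁅K,L⁆ B →ₗ[K] C) (x : L) (y : A) (z : B) :
    ⁅x, φ y z⁆ = φ ⁅x, y⁆ z + φ y ⁅x, z⁆ := by
  rw [φ.map_lie, LieHom.lie_apply, sub_add_cancel]

namespace IsStringBasis

variable {φ : A →ₗ⁅K,L⁆ B →ₗ[K] C} {h e f : L} {a b c k : ℕ} {v : ℕ → A} {w : ℕ → B}
  {u : ℕ → C}

theorem exists_minimal_apply_ne_zero (SA : IsStringBasis K h e f a v)
    (SB : IsStringBasis K h e f b w) (hφ : φ ≠ 0) :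
    ∃ k, (∀ i j, i + j < k → φ (v i) (w j) = 0) ∧ ∃ i j, i + j = k ∧ φ (v i) (w j) ≠ 0 := by
  classical
  have exists_ne : ∃ k, ∃ i j, i + j = k ∧ φ (v i) (w j) ≠ 0 := by
    by_contra! eq_zero
    refine hφ (LieModuleHom.ext fun x ↦ LinearMap.congr_fun (f := (φ : A →ₗ[K] B →ₗ[K] C)) (g := 0)
      (LinearMap.ext_on SA.span_eq_top ?_) x)
    rintro _ ⟨i, rfl⟩
    refine LinearMap.ext_on SB.span_eq_top ?_
    rintro _ ⟨j, rfl⟩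
    exact eq_zero _ i j rfl
  refine ⟨Nat.find exists_ne, fun i j hij ↦ ?_, Nat.find_spec exists_ne⟩
  by_contra ne
  exact Nat.find_min exists_ne hij ⟨i, j, rfl, ne⟩

theorem lie_h_apply_apply (SA : IsStringBasis K h e f a v) (SB : IsStringBasis K h e f b w)
    (i j : ℕ) :
    ⁅h, φ (v i) (w j)⁆ = ((a : K) + b - 2 * ((i + j : ℕ) : K)) • φ (v i) (w j) := by
  rw [lie_apply_apply, SA.lie_h, SB.lie_h, map_smul, map_smul, LinearMap.smul_apply]
  push_cast
  module

theorem apply_eq_neg_one_pow_smul (SA : IsStringBasis K h e f a v)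
    (SB : IsStringBasis K h e f b w) (low : ∀ i j, i + j < k → φ (v i) (w j) = 0) {i j : ℕ}
    (hij : i + j = k) : φ (v i) (w j) = (-1 : K) ^ i • φ (v 0) (w k) := by
  induction i generalizing j with
  | zero => rw [pow_zero, one_smul, ← hij, zero_add]
  | succ i ih =>
    have lie_f := lie_apply_apply φ f (v i) (w j)
    rw [low i j (by omega), lie_zero, SA.lie_f, SB.lie_f, ih (j := j + 1) (by omega)] at lie_f
    rw [eq_neg_of_add_eq_zero_left lie_f.symm, pow_succ, mul_neg_one, neg_smul]

theorem lie_e_apply_zero (SA : IsStringBasis K h e f a v) (SB : IsStringBasis K h e f b w)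
    (low : ∀ i j, i + j < k → φ (v i) (w j) = 0) : ⁅e, φ (v 0) (w k)⁆ = 0 := by
  rw [lie_apply_apply, SA.lie_e, SB.lie_e, Nat.cast_zero, zero_mul, zero_smul, map_zero,
    LinearMap.zero_apply, zero_add, map_smul]
  rcases k with _ | k
  · rw [Nat.cast_zero, zero_mul, zero_smul]
  · rw [low 0 _ (by omega), smul_zero]

variable [CharZero K]

theorem add_eq_of_apply_ne_zero (SA : IsStringBasis K h e f a v) (SB : IsStringBasis K h e f b w)
    (SC : IsStringBasis K h e f c u) (low : ∀ i j, i + j < k → φ (v i) (w j) = 0)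
    (ne : φ (v 0) (w k) ≠ 0) : a + b = c + 2 * k := by
  have weight_eq : (a : K) + b - 2 * ((0 + k : ℕ) : K) = c :=
    SC.weight_eq_of_lie_e_eq_zero ne (SA.lie_h_apply_apply SB 0 k) (SA.lie_e_apply_zero SB low)
  have : ((a + b : ℕ) : K) = ((c + 2 * k : ℕ) : K) := by
    push_cast at weight_eq ⊢
    linear_combination weight_eq
  exact_mod_cast this

theorem exists_apply_eq_smul (SA : IsStringBasis K h e f a v) (SB : IsStringBasis K h e f b w)
    (SC : IsStringBasis K h e f c u) (add_eq : a + b = c + 2 * k) {i j l : ℕ}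
    (hij : i + j = k + l) : ∃ x : K, φ (v i) (w j) = x • u l := by
  refine SC.exists_eq_smul ?_
  have cast_eq : ((a + b : ℕ) : K) = ((c + 2 * k : ℕ) : K) := by rw [add_eq]
  rw [SA.lie_h_apply_apply SB, hij]
  push_cast at cast_eq ⊢
  congr 1
  linear_combination cast_eq

theorem apply_eq_clebschGordan_smul (SA : IsStringBasis K h e f a v)
    (SB : IsStringBasis K h e f b w) (SC : IsStringBasis K h e f c u)
    (add_eq : a + b = c + 2 * k) (low : ∀ i j, i + j < k → φ (v i) (w j) = 0)
    (top : φ (v 0) (w k) = u 0) {l : ℕ} (hl : l ≤ c) {i j : ℕ} (hij : i + j = k + l) :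
    φ (v i) (w j) = (clebschGordan a b c l i j : K) • u l := by
  induction l generalizing i j with
  | zero => simp [SA.apply_eq_neg_one_pow_smul SB low hij, top, clebschGordan]
  | succ l ih =>
    obtain ⟨x, hx⟩ := SA.exists_apply_eq_smul SB SC add_eq hij (φ := φ)
    have left : φ ⁅e, v i⁆ (w j) =
        ((i : K) * (a + 1 - i) * (clebschGordan a b c l (i - 1) j : K)) • u l := by
      rw [SA.lie_e, map_smul, LinearMap.smul_apply]
      rcases i with _ | i
      · simp
      · rw [ih (by omega) (by omega), smul_smul, Nat.add_sub_cancel]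
    have right : φ (v i) ⁅e, w j⁆ =
        ((j : K) * (b + 1 - j) * (clebschGordan a b c l i (j - 1) : K)) • u l := by
      rw [SB.lie_e, map_smul]
      rcases j with _ | j
      · simp
      · rw [ih (by omega) (by omega), smul_smul, Nat.add_sub_cancel]
    have lie_e := lie_apply_apply φ e (v i) (w j)
    rw [left, right, hx, lie_smul, SC.lie_e, smul_smul, ← add_smul] at lie_e
    have coeff_eq := smul_left_injective K (SC.ne_zero l (by omega)) lie_e
    have ne : (c : K) - l ≠ 0 := by
      rw [sub_ne_zero, Nat.cast_injective.ne_iff]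
      omega
    rw [hx, clebschGordan]
    push_cast at coeff_eq ⊢
    rw [← coeff_eq]
    congr 1
    field_simp [Nat.cast_add_one_ne_zero (R := K) l]
    ring

theorem exists_isClebschGordan (SA : IsStringBasis K h e f a v) (SB : IsStringBasis K h e f b w)
    (SC : IsStringBasis K h e f c u) (hφ : φ ≠ 0) :
    ∃ k u', IsStringBasis K h e f c u' ∧ IsClebschGordan φ a b c k v w u' := by
  obtain ⟨k, low, i₀, j₀, hij, ne₀⟩ := SA.exists_minimal_apply_ne_zero SB hφ
  have ne : φ (v 0) (w k) ≠ 0 := fun h₀ ↦ ne₀ <| by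
    rw [SA.apply_eq_neg_one_pow_smul SB low hij, h₀, smul_zero]
  have add_eq := SA.add_eq_of_apply_ne_zero SB SC low ne
  obtain ⟨β, top⟩ : ∃ β : K, φ (v 0) (w k) = β • u 0 :=
    SA.exists_apply_eq_smul SB SC add_eq (zero_add k)
  have SC' := SC.const_smul (left_ne_zero_of_smul (top ▸ ne))
  refine ⟨k, β • u, SC', ⟨add_eq, ?_, ?_⟩, low,
    fun l hl i j ↦ SA.apply_eq_clebschGordan_smul SB SC' add_eq low top hl⟩
  · by_contra! lt
    have alternating := SA.apply_eq_neg_one_pow_smul SB low (add_zero k)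
    rw [SA.eq_zero k lt, map_zero, LinearMap.zero_apply] at alternating
    exact smul_ne_zero (pow_ne_zero _ (by norm_num)) ne alternating.symm
  · by_contra! lt
    exact ne (by rw [SB.eq_zero k lt, map_zero])

end IsStringBasis

/-- For Clebsch–Gordan projections of `A ⊗ B` to the `k`-th summand `C` and of `A ⊗ C` to the
`k'`-th summand `D`, and `i + j + l = k + k'`, the composition sends `(v i, v j, w l)` to this
multiple of the highest weight vector of `D`. -/
def topCoeff (a b c k' i j l : ℕ) : ℚ :=
  if i ≤ k' then (-1) ^ i * clebschGordan a b c (k' - i) j l else 0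

namespace IsClebschGordan

variable {h e f : L} {a b c d k k' : ℕ} {v : ℕ → A} {w : ℕ → B} {u : ℕ → C} [CharZero K]

theorem apply_apply {D : Type*} [AddCommGroup D] [Module K D] [LieRingModule L D]
    [LieModule K L D] {t : ℕ → D} {φ : A →ₗ⁅K,L⁆ B →ₗ[K] C} {ψ : A →ₗ⁅K,L⁆ C →ₗ[K] D}
    (P : IsClebschGordan φ a b c k v w u) (Q : IsClebschGordan ψ a c d k' v u t) {i j l : ℕ}
    (hijl : i + j + l = k + k') :
    ψ (v i) (φ (v j) (w l)) = (topCoeff a b c k' i j l : K) • t 0 := by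
  have := Q.le_right
  unfold topCoeff
  split_ifs with hi
  · rw [P.apply_eq_smul (k' - i) (by omega) j l (by omega), map_smul,
      Q.apply_eq_smul 0 (by omega) i (k' - i) (by omega), smul_smul, clebschGordan]
    push_cast
    rw [mul_comm]
  · rw [P.apply_eq_zero j l (by omega), map_zero, Rat.cast_zero, zero_smul]

theorem odd_of_skew [LieModule K L A] {φ : A →ₗ⁅K,L⁆ A →ₗ[K] C}
    (P : IsClebschGordan φ a a c k v v u)
    (SC : IsStringBasis K h e f c u) (skew : ∀ x y, φ x y = -φ y x) : Odd k := by
  have := IsAddTorsionFree.of_isTorsionFree K C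
  have lowest := P.apply_eq_smul 0 (by omega) 0 k (by omega)
  have highest := P.apply_eq_smul 0 (by omega) k 0 (by omega)
  by_contra even
  rw [Nat.not_odd_iff_even] at even
  rw [skew, highest, clebschGordan, clebschGordan, even.neg_one_pow, pow_zero, Rat.cast_one,
    one_smul, neg_eq_self] at lowest
  exact SC.ne_zero 0 (by omega) lowest

end IsClebschGordan
end ClebschGordan

section Weights

theorem exists_topCoeff_add_ne_zero {a b c d k k' : ℕ} (sum_le : a + b + c + d ≤ 17)
    (hb : 1 ≤ b) (had : a ≠ d) (hbd : b ≠ d)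
    (aac : IsClebschGordanIndex a a c k) (hk : Odd k) (acd : IsClebschGordanIndex a c d k')
    (bbd : ∃ m, Odd m ∧ IsClebschGordanIndex b b d m)
    (abcd : (∃ m, IsClebschGordanIndex a b d m) ∨ ∃ m, IsClebschGordanIndex a b c m) :
    ∃ l, l + 1 = k + k' ∧
      topCoeff a a c k' 0 1 l + topCoeff a a c k' 1 l 0 + topCoeff a a c k' l 0 1 ≠ 0 := by
  obtain ⟨ha, hkk'⟩ : a = 4 ∧ ((k, k') = (3, 2) ∨ (k, k') = (3, 0) ∨ (k, k') = (1, 4)) := by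
    obtain ⟨k, rfl⟩ := hk
    obtain ⟨_, ⟨m, rfl⟩, bbd⟩ := bbd
    obtain ⟨⟨_, _, _⟩, ⟨_, _, _⟩, _, _, _⟩ := aac, acd, bbd
    obtain ⟨a, rfl⟩ : ∃ a', a = 2 * a' := ⟨a / 2, by omega⟩
    obtain ⟨b, rfl⟩ : ∃ b', b = 2 * b' := ⟨b / 2, by
      rcases abcd with ⟨m, _, _, _⟩ | ⟨m, _, _, _⟩ <;> omega⟩
    obtain ⟨c, rfl⟩ : ∃ c', c = 4 * c' + 2 := ⟨c / 4, by omega⟩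
    obtain ⟨d, rfl⟩ : ∃ d', d = 4 * d' + 2 := ⟨d / 4, by omega⟩
    obtain ⟨_, _⟩ : c ≤ 1 ∧ d ≤ 1 := by omega
    simp only [Prod.mk.injEq]
    interval_cases c <;> interval_cases d <;> omega
  have hc : c = 8 - 2 * k := by have := aac.add_eq; omega
  simp only [Prod.mk.injEq] at hkk'
  rcases hkk' with ⟨rfl, rfl⟩ | ⟨rfl, rfl⟩ | ⟨rfl, rfl⟩ <;> subst ha hc
  all_goals exact ⟨_, rfl, by norm_num [topCoeff, clebschGordan]⟩

theorem weights_mem_of_isClebschGordanIndex {a b c d k k' : ℕ} (sum_le : a + b + c + d ≤ 17)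
    (hb : 1 ≤ b) (hc : 1 ≤ c) (had : a ≠ d) (hbd : b ≠ d)
    (abc : IsClebschGordanIndex a b c k) (acd : IsClebschGordanIndex a c d k')
    (aad : ∃ m, Odd m ∧ IsClebschGordanIndex a a d m)
    (bbcd : (∃ m, Odd m ∧ IsClebschGordanIndex b b d m) ∨ ∃ m, IsClebschGordanIndex b c d m) :
    (a, b, c, k, k') ∈ ({(4, 4, 2, 3, 2), (4, 6, 2, 4, 2), (4, 4, 4, 2, 3), (4, 6, 4, 3, 3),
      (4, 4, 6, 1, 4), (6, 4, 4, 3, 4), (4, 2, 4, 1, 1), (4, 4, 2, 3, 0)} : Finset _) := by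
  obtain ⟨_, ⟨m, rfl⟩, aad⟩ := aad
  obtain ⟨⟨_, _, _⟩, ⟨_, _, _⟩, _, _, _⟩ := abc, acd, aad
  obtain ⟨⟨a, rfl⟩, ⟨b, rfl⟩, ⟨c, rfl⟩, ⟨d, rfl⟩⟩ : (∃ x, a = 2 * x) ∧ (∃ x, b = 2 * x) ∧
      (∃ x, c = 2 * x) ∧ ∃ x, d = 4 * x + 2 := by
    rcases bbcd with ⟨_, ⟨p, rfl⟩, _, _, _⟩ | ⟨p, _, _, _⟩ <;>
      exact ⟨⟨a / 2, by omega⟩, ⟨b / 2, by omega⟩, ⟨c / 2, by omega⟩, ⟨d / 4, by omega⟩⟩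
  have d_le : 4 * d + 2 ≤ 4 * b ∨ 4 * d + 2 ≤ 2 * b + 2 * c := by
    rcases bbcd with ⟨m, _, _, _, _⟩ | ⟨m, _, _, _⟩ <;> omega
  obtain ⟨rfl, rfl⟩ : k = a + b - c ∧ k' = a + c - (2 * d + 1) := by omega
  obtain ⟨_, _⟩ : d ≤ 2 ∧ a ≤ 6 := by omega
  interval_cases d <;> interval_cases a <;> try omega
  all_goals
    obtain ⟨_, _⟩ : c ≤ 5 ∧ 1 ≤ c := by omega
    interval_cases c <;> try omega
  all_goals
    obtain ⟨_, _⟩ : b ≤ 5 ∧ 1 ≤ b := by omega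
    interval_cases b <;> first | omega | decide

theorem exists_topCoeff_ne {a b c d k k' : ℕ} (sum_le : a + b + c + d ≤ 17)
    (hb : 1 ≤ b) (hc : 1 ≤ c) (had : a ≠ d) (hbd : b ≠ d)
    (abc : IsClebschGordanIndex a b c k) (acd : IsClebschGordanIndex a c d k')
    (aad : ∃ m, Odd m ∧ IsClebschGordanIndex a a d m)
    (bbcd : (∃ m, Odd m ∧ IsClebschGordanIndex b b d m) ∨ ∃ m, IsClebschGordanIndex b c d m) :
    ∃ j l, j + l = k + k' ∧ topCoeff a b c k' 0 j l ≠ topCoeff a b c k' j 0 l := by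
  have mem := weights_mem_of_isClebschGordanIndex sum_le hb hc had hbd abc acd aad bbcd
  simp only [Finset.mem_insert, Finset.mem_singleton, Prod.mk.injEq] at mem
  rcases mem with h | h | h | h | h | h | h | h <;> obtain ⟨rfl, rfl, rfl, rfl, rfl⟩ := h
  case inr.inr.inr.inr.inr.inr.inl => exact ⟨1, 1, rfl, by norm_num [topCoeff, clebschGordan]⟩
  all_goals exact ⟨3, _, Nat.add_sub_cancel' (by decide), by norm_num [topCoeff, clebschGordan]⟩

end Weights

section Sl2

namespace IsSympatheticDecomp

variable {g : Type*} [LieRing g] [LieAlgebra ℂ g] {s : LieSubalgebra ℂ g} {h e f : s}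

section Bracket

variable {r : ℕ} {V : Fin r → Submodule ℂ g} (D : IsSympatheticDecomp s V) {i j q : Fin r}

/-- The Lie bracket `V i × V j → V q` as an equivariant pairing. -/
def bracket (hq : bracketTable V i j = some q) :
    D.module i →ₗ⁅ℂ,s⁆ D.module j →ₗ[ℂ] D.module q :=
  { LinearMap.mk₂ ℂ
      (fun (x : D.module i) (y : D.module j) ↦
        (⟨⁅(x : g), (y : g)⁆, D.lie_mem_of_bracketTable_eq_some hq x.2 y.2⟩ : D.module q))
      (fun _ _ _ ↦ Subtype.ext (add_lie _ _ _)) (fun _ _ _ ↦ Subtype.ext (smul_lie _ _ _))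
      (fun _ _ _ ↦ Subtype.ext (lie_add _ _ _)) (fun _ _ _ ↦ Subtype.ext (lie_smul _ _ _)) with
    map_lie' := fun {x y} ↦ LinearMap.ext fun z ↦ Subtype.ext (lie_lie (x : g) (y : g) (z : g)) }

theorem coe_bracket (hq : bracketTable V i j = some q) (x : D.module i) (y : D.module j) :
    (D.bracket hq x y : g) = ⁅(x : g), (y : g)⁆ := rfl

theorem bracket_ne_zero (hq : bracketTable V i j = some q) : D.bracket hq ≠ 0 := by
  obtain ⟨x, hx, y, hy, ne⟩ := D.exists_lie_ne_zero_of_bracketTable_eq_some hq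
  intro eq_zero
  refine ne ?_
  rw [← D.coe_bracket hq ⟨x, hx⟩ ⟨y, hy⟩, eq_zero]
  rfl

theorem bracket_skew (hq : bracketTable V i i = some q) (x y : D.module i) :
    D.bracket hq x y = -D.bracket hq y x :=
  Subtype.ext (lie_skew (x : g) (y : g)).symm

variable {a b c : ℕ} {v : ℕ → D.module i} {w : ℕ → D.module j} {u : ℕ → D.module q}

theorem exists_isClebschGordan_bracket (hq : bracketTable V i j = some q)
    (Si : IsStringBasis ℂ h e f a v) (Sj : IsStringBasis ℂ h e f b w)
    (Sq : IsStringBasis ℂ h e f c u) :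
    ∃ k u', IsStringBasis ℂ h e f c u' ∧ IsClebschGordan (D.bracket hq) a b c k v w u' :=
  Si.exists_isClebschGordan Sj Sq (D.bracket_ne_zero hq)

theorem exists_isClebschGordanIndex (hq : bracketTable V i j = some q)
    (Si : IsStringBasis ℂ h e f a v) (Sj : IsStringBasis ℂ h e f b w)
    (Sq : IsStringBasis ℂ h e f c u) : ∃ k, IsClebschGordanIndex a b c k := by
  obtain ⟨k, _, -, P⟩ := D.exists_isClebschGordan_bracket hq Si Sj Sq
  exact ⟨k, P.toIsClebschGordanIndex⟩

theorem exists_odd_isClebschGordanIndex (hq : bracketTable V i i = some q)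
    (Si : IsStringBasis ℂ h e f a v) (Sq : IsStringBasis ℂ h e f c u) :
    ∃ k, Odd k ∧ IsClebschGordanIndex a a c k := by
  obtain ⟨k, _, Sq', P⟩ := D.exists_isClebschGordan_bracket hq Si Si Sq
  exact ⟨k, P.odd_of_skew Sq' (D.bracket_skew hq), P.toIsClebschGordanIndex⟩

theorem ne_of_isStringBasis {t : IsSl2Triple h e f} (htop : t.toLieSubalgebra ℂ = ⊤)
    (hV : ∀ i, ¬ IsTrivial s (D.module i)) (hi : ∀ p q, bracketTable V p q ≠ some i)
    (hj : ∀ p, bracketTable V p j = none) (Si : IsStringBasis ℂ h e f a v)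
    (Sj : IsStringBasis ℂ h e f b w) : a ≠ b := by
  rintro rfl
  obtain ⟨φ, hφ⟩ := Si.exists_lieModuleHom htop Sj
  have φ_eq_zero : φ = 0 := D.eq_zero_of_lieModuleHom hV
    (fun p q hpq ↦ hi p q (D.bracketTable_eq_iff.mpr hpq))
    (fun p ↦ D.bracketTable_eq_iff.mp (hj p)) φ
  refine Sj.ne_zero 0 (Nat.zero_le _) ?_
  rw [← hφ, φ_eq_zero, LieModuleHom.zero_apply]

end Bracket

section ReducedTable

variable {V : Fin 4 → Submodule ℂ g} (D : IsSympatheticDecomp s V)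
  (T : IsReducedTable (bracketTable V))
include T

section StringBases

variable {n : Fin 4 → ℕ} {v : ∀ i, ℕ → D.module i} (S : ∀ i, IsStringBasis ℂ h e f (n i) (v i))
include S

theorem not_isTableA_of_isStringBasis (sum_le : n 0 + n 1 + n 2 + n 3 ≤ 17) (one_le : 1 ≤ n 1)
    (ne₀ : n 0 ≠ n 3) (ne₁ : n 1 ≠ n 3) : ¬ IsTableA (bracketTable V) := by
  intro TA
  obtain ⟨k, u, Su, P⟩ := D.exists_isClebschGordan_bracket TA.zero_zero (S 0) (S 0) (S 2)
  obtain ⟨k', t, St, Q⟩ := D.exists_isClebschGordan_bracket T.zero_two (S 0) Su (S 3)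
  obtain ⟨l, hl, ne_zero⟩ := exists_topCoeff_add_ne_zero sum_le one_le ne₀ ne₁
    P.toIsClebschGordanIndex (P.odd_of_skew Su (D.bracket_skew _)) Q.toIsClebschGordanIndex
    (D.exists_odd_isClebschGordanIndex TA.one_one (S 1) (S 3))
    (TA.zero_one.imp (fun h ↦ D.exists_isClebschGordanIndex h.1 (S 0) (S 1) (S 3))
      fun h ↦ D.exists_isClebschGordanIndex h (S 0) (S 1) (S 2))
  have jacobi (x y z : D.module 0) :
      D.bracket T.zero_two x (D.bracket TA.zero_zero y z) +
        D.bracket T.zero_two y (D.bracket TA.zero_zero z x) +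
        D.bracket T.zero_two z (D.bracket TA.zero_zero x y) = 0 :=
    Subtype.ext (lie_jacobi (x : g) (y : g) (z : g))
  have sum_smul := jacobi (v 0 0) (v 0 1) (v 0 l)
  rw [P.apply_apply Q (by omega), P.apply_apply Q (by omega), P.apply_apply Q (by omega),
    ← add_smul, ← add_smul] at sum_smul
  have := (smul_eq_zero.mp sum_smul).resolve_right (St.ne_zero 0 (Nat.zero_le _))
  exact ne_zero (by exact_mod_cast this)

theorem not_isTableB_of_isStringBasis (sum_le : n 0 + n 1 + n 2 + n 3 ≤ 17) (one_le : ∀ i, 1 ≤ n i)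
    (ne₀ : n 0 ≠ n 3) (ne₁ : n 1 ≠ n 3) : ¬ IsTableB (bracketTable V) := by
  intro TB
  obtain ⟨k, u, Su, P⟩ := D.exists_isClebschGordan_bracket TB.zero_one (S 0) (S 1) (S 2)
  obtain ⟨k', t, St, Q⟩ := D.exists_isClebschGordan_bracket T.zero_two (S 0) Su (S 3)
  obtain ⟨j, l, hjl, ne⟩ := exists_topCoeff_ne sum_le (one_le 1) (one_le 2) ne₀ ne₁
    P.toIsClebschGordanIndex Q.toIsClebschGordanIndex
    (D.exists_odd_isClebschGordanIndex TB.zero_zero (S 0) (S 3))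
    (TB.one_one.imp (fun h ↦ D.exists_odd_isClebschGordanIndex h (S 1) (S 3))
      fun h ↦ D.exists_isClebschGordanIndex h.2 (S 1) (S 2) (S 3))
  have commute (x y : D.module 0) (z : D.module 1) :
      D.bracket T.zero_two x (D.bracket TB.zero_one y z) =
        D.bracket T.zero_two y (D.bracket TB.zero_one x z) := by
    have lie_lie_eq_zero : ⁅⁅(x : g), (y : g)⁆, (z : g)⁆ = 0 := by
      rw [← lie_skew, neg_eq_zero]
      exact D.lie_eq_zero_of_bracketTable_eq_none (T.three 1) z.2
        (D.lie_mem_of_bracketTable_eq_some TB.zero_zero x.2 y.2)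
    refine Subtype.ext ((leibniz_lie (x : g) (y : g) (z : g)).trans ?_)
    rw [lie_lie_eq_zero, zero_add]
    rfl
  have smul_eq := commute (v 0 0) (v 0 j) (v 1 l)
  rw [P.apply_apply Q (by omega), P.apply_apply Q (by omega)] at smul_eq
  have := smul_left_injective ℂ (St.ne_zero 0 (Nat.zero_le _)) smul_eq
  exact ne (by exact_mod_cast this)

end StringBases

variable [FiniteDimensional ℂ g]
include D

theorem not_isTrivial_two_of_isSl2Triple (t : IsSl2Triple h e f)
    (htop : t.toLieSubalgebra ℂ = ⊤) : ¬ IsTrivial s (D.module 2) := by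
  intro trivial
  obtain ⟨-, finrank_three, TA⟩ := D.finrank_eq_two_of_isTrivial_two T trivial
  have := D.isIrreducible_module
  obtain ⟨b, w, S₁⟩ := exists_isStringBasis (K := ℂ) (M := D.module 1) t htop
  obtain ⟨d, u, S₃⟩ := exists_isStringBasis (K := ℂ) (M := D.module 3) t htop
  have hd : finrank ℂ (V 3) = d + 1 := S₃.finrank_eq
  obtain ⟨k, -, P⟩ := D.exists_odd_isClebschGordanIndex TA.one_one S₁ S₃
  have := P.add_eq
  omega

theorem twentyfive_le_finrank_of_finrank_eq_three (t : IsSl2Triple h e f)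
    (dim : finrank ℂ s = 3) : 25 ≤ finrank ℂ g := by
  by_contra! lt
  have htop := toLieSubalgebra_eq_top_of_finrank_eq_three ℂ t dim
  have hV : ∀ i, ¬ IsTrivial s (D.module i) := fun
    | 0 => D.not_isTrivial_zero T
    | 1 => D.not_isTrivial_one T
    | 2 => D.not_isTrivial_two_of_isSl2Triple T t htop
    | 3 => D.not_isTrivial_three T
  have := D.isIrreducible_module
  choose n v S using fun i ↦ exists_isStringBasis (K := ℂ) (M := D.module i) t htop
  have finrank_eq (i : Fin 4) : finrank ℂ (V i) = n i + 1 := (S i).finrank_eq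
  have one_le (i : Fin 4) : 1 ≤ n i := by
    have := D.two_le_finrank (hV i)
    have := finrank_eq i
    omega
  have ne₀ : n 0 ≠ n 3 := D.ne_of_isStringBasis htop hV T.ne_zero T.three (S 0) (S 3)
  have ne₁ : n 1 ≠ n 3 := D.ne_of_isStringBasis htop hV T.ne_one T.three (S 1) (S 3)
  have sum_le : n 0 + n 1 + n 2 + n 3 ≤ 17 := by
    have := D.finrank_eq
    simp only [Fin.sum_univ_four, finrank_eq] at this
    omega
  exact T.tableA_or_tableB.elim (D.not_isTableA_of_isStringBasis T S sum_le (one_le 1) ne₀ ne₁)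
    (D.not_isTableB_of_isStringBasis T S sum_le one_le ne₀ ne₁)

end ReducedTable
end IsSympatheticDecomp
end Sl2

end Symp

/-- A sympathetic Lie algebra with simple Levi subalgebra whose radical
decomposes into exactly 4 simple modules (satisfying the convention) has dimension ≥ 25. -/
theorem stmt0 (g : Type*) [LieRing g] [LieAlgebra ℂ g] [FiniteDimensional ℂ g]
    (hsymp : Symp.IsSympathetic g)
    (s : LieSubalgebra ℂ g) (hs : Symp.IsSimpleLevi g s)
    (V : Fin 4 → Submodule ℂ g) (hdec : Symp.IsDecomp g s V)
    (hconv : Symp.Convention g V) :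
    25 ≤ Module.finrank ℂ g := by
  have D : Symp.IsSympatheticDecomp s V := ⟨hsymp, hs, hdec, hconv⟩
  obtain ⟨σ, T⟩ := D.exists_perm_isReducedTable
  have := hs.1
  rcases Symp.finrank_eq_three_or_eight_le ℂ s with ⟨dim, h, e, f, t⟩ | dim
  · exact (D.comp_perm σ).twentyfive_le_finrank_of_finrank_eq_three T t dim
  · exact (D.comp_perm σ).twentyfive_le_finrank_of_eight_le T dim
end

section
/- Let g = s ⋉ h be a finite-dimensional sympathetic complex Lie algebra with simple Levi subalgebra s whose radical h decomposes into simple s-modules V_1, ..., V_k. Suppose D is a derivation of g such that D vanishes on s and, for each i, the restriction of D to V_i is λ_i times the identity for some scalar λ_i. Then D is an inner derivation if and only if D vanishes on h (equivalently, all λ_i = 0). -/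
section Radical

open LieAlgebra

variable {R L : Type*} [CommRing R] [LieRing L] [LieAlgebra R L]

theorem isSolvable_iff_exists_derivedSeriesOfIdeal_eq_bot {I : LieIdeal R L} :
    IsSolvable I ↔ ∃ k, derivedSeriesOfIdeal R L k I = ⊥ := by
  simp_rw [isSolvable_iff R, LieIdeal.derivedSeries_eq_bot_iff]

theorem isSolvable_of_lie_self_le {I J : LieIdeal R L} [IsSolvable I] (h : ⁅J, J⁆ ≤ I) :
    IsSolvable J := by
  obtain ⟨k, hk⟩ := isSolvable_iff_exists_derivedSeriesOfIdeal_eq_bot.mp ‹IsSolvable I›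
  refine isSolvable_iff_exists_derivedSeriesOfIdeal_eq_bot.mpr ⟨k + 1, le_bot_iff.mp ?_⟩
  calc derivedSeriesOfIdeal R L (k + 1) J
      = derivedSeriesOfIdeal R L k ⁅J, J⁆ := derivedSeriesOfIdeal_add J k 1
    _ ≤ derivedSeriesOfIdeal R L k I := derivedSeriesOfIdeal_mono h k
    _ = ⊥ := hk

theorem isSolvable_normalizer (I : LieIdeal R L) [IsSolvable I] : IsSolvable I.normalizer :=
  isSolvable_of_lie_self_le <| (LieSubmodule.mono_lie_left I.normalizer le_top).trans <|
    (LieSubmodule.top_lie_le_iff_le_normalizer I.normalizer I).mpr le_rfl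

theorem normalizer_radical [IsNoetherian R L] : (radical R L).normalizer = radical R L :=
  le_antisymm ((LieIdeal.solvable_iff_le_radical R L _).mp (isSolvable_normalizer _))
    (radical R L).le_normalizer

theorem mem_radical_of_lie_eq_zero_of_codisjoint [IsNoetherian R L] {s : Submodule R L}
    (hs : Codisjoint s (radical R L).toSubmodule) {x : L} (hx : ∀ y ∈ s, ⁅x, y⁆ = 0) :
    x ∈ radical R L := by
  rw [← normalizer_radical, LieSubmodule.mem_normalizer]
  intro y
  obtain ⟨a, r, ha, hr, rfl⟩ := Submodule.codisjoint_iff_exists_add_eq.mp hs y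
  rw [add_lie, ← lie_skew, hx a ha, neg_zero, zero_add]
  exact lie_mem_left R L _ r x hr

end Radical

section Nilpotent

open LieAlgebra Module
open LieModule hiding IsNilpotent
open scoped TensorProduct

theorem trace_toEnd_eq_zero_of_mem_derivedSeries_one {R L : Type*} [CommRing R] [LieRing L]
    [LieAlgebra R L] (M : Type*) [AddCommGroup M] [Module R M] [LieRingModule L M] [LieModule R L M]
    {x : L} (hx : x ∈ derivedSeries R L 1) : LinearMap.trace R M (toEnd R L M x) = 0 :=
  trace_toEnd_eq_zero_of_mem_lcs R L M le_rfl (by simpa using hx)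

theorem isNilpotent_toEnd_of_isNilpotent_toEnd_quotient {R L M : Type*} [CommRing R] [LieRing L]
    [LieAlgebra R L] [AddCommGroup M] [Module R M] [LieRingModule L M] [LieModule R L M] {x : L}
    {N : LieSubmodule R L M} (hN : ∀ m ∈ N, ⁅x, m⁆ = 0)
    (hx : IsNilpotent (toEnd R L (M ⧸ N) x)) : IsNilpotent (toEnd R L M x) := by
  obtain ⟨n, hn⟩ := hx
  refine ⟨n + 1, LinearMap.ext fun m ↦ ?_⟩
  have hmem : (toEnd R L M x ^ n) m ∈ N := by
    rw [← LieSubmodule.Quotient.mk_eq_zero, ← toEnd_pow_apply_map, hn, LinearMap.zero_apply]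
  rw [pow_succ', Module.End.mul_apply, toEnd_apply_apply, hN _ hmem, LinearMap.zero_apply]

section Field

variable {K L : Type*} [Field K] [CharZero K] [LieRing L] [LieAlgebra K L]

theorem exists_lieSubmodule_ne_bot_forall_lie_eq_zero (I : LieIdeal K L) [IsSolvable I]
    (M : Type*) [AddCommGroup M] [Module K M] [FiniteDimensional K M] [Nontrivial M]
    [LieRingModule L M] [LieModule K L M] [IsTriangularizable K I M] :
    ∃ N : LieSubmodule K L M, N ≠ ⊥ ∧
      ∀ x ∈ I, x ∈ derivedSeries K L 1 → ∀ m ∈ N, ⁅x, m⁆ = 0 := by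
  obtain ⟨χ, hχ⟩ := exists_nontrivial_weightSpace_of_isSolvable K I M
  let N : LieSubmodule K L M := weightSpaceOfIsLieTower K M χ
  have : Nontrivial N := hχ
  refine ⟨N, (LieSubmodule.nontrivial_iff_ne_bot K L M).mp this, fun x hxI hx ↦ ?_⟩
  have lie_eq_smul : ∀ m ∈ N, ⁅x, m⁆ = χ ⟨x, hxI⟩ • m := fun m hm ↦
    (mem_weightSpace (χ : I → K) m).mp hm ⟨x, hxI⟩
  have toEnd_eq_smul : toEnd K L N x = χ ⟨x, hxI⟩ • LinearMap.id :=
    LinearMap.ext fun m ↦ Subtype.ext (lie_eq_smul m m.2)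
  have weight_eq_zero : χ ⟨x, hxI⟩ = 0 := by
    simpa [toEnd_eq_smul, finrank_pos.ne'] using trace_toEnd_eq_zero_of_mem_derivedSeries_one N hx
  intro m hm
  rw [lie_eq_smul m hm, weight_eq_zero, zero_smul]

theorem isNilpotent_toEnd_of_mem_of_mem_derivedSeries_one_of_isAlgClosed [IsAlgClosed K]
    {I : LieIdeal K L} [IsSolvable I] {x : L} (hxI : x ∈ I) (hx : x ∈ derivedSeries K L 1)
    (M : Type*) [AddCommGroup M] [Module K M] [FiniteDimensional K M] [LieRingModule L M]
    [LieModule K L M] :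
    IsNilpotent (toEnd K L M x) := by
  induction hn : finrank K M using Nat.strong_induction_on generalizing M with
  | _ n ih =>
    obtain _ | _ := subsingleton_or_nontrivial M
    · exact ⟨1, Subsingleton.elim _ _⟩
    obtain ⟨N, hN, hNx⟩ := exists_lieSubmodule_ne_bot_forall_lie_eq_zero I M
    have : FiniteDimensional K (M ⧸ N) :=
      inferInstanceAs (FiniteDimensional K (M ⧸ N.toSubmodule))
    have finrank_lt : finrank K (M ⧸ N) < n := by
      have hpos : 1 ≤ finrank K N.toSubmodule := by
        rwa [Submodule.one_le_finrank_iff, Ne, LieSubmodule.toSubmodule_eq_bot]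
      have hadd : finrank K (M ⧸ N) + finrank K N.toSubmodule = finrank K M :=
        N.toSubmodule.finrank_quotient_add_finrank
      omega
    exact isNilpotent_toEnd_of_isNilpotent_toEnd_quotient (hNx x hxI hx)
      (ih _ finrank_lt (M ⧸ N) rfl)

end Field

theorem isSolvable_baseChange {R L : Type*} [CommRing R] [LieRing L] [LieAlgebra R L]
    (A : Type*) [CommRing A] [Algebra R A] (I : LieIdeal R L) [IsSolvable I] :
    IsSolvable (I.baseChange A) := by
  obtain ⟨k, hk⟩ := isSolvable_iff_exists_derivedSeriesOfIdeal_eq_bot.mp ‹IsSolvable I›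
  refine isSolvable_iff_exists_derivedSeriesOfIdeal_eq_bot.mpr ⟨k, ?_⟩
  rw [derivedSeriesOfIdeal_baseChange, hk, LieSubmodule.baseChange_bot]

variable {R L : Type*} [CommRing R] [IsDomain R] [CharZero R] [LieRing L] [LieAlgebra R L]

theorem isNilpotent_toEnd_of_mem_of_mem_derivedSeries_one {I : LieIdeal R L} [IsSolvable I] {x : L}
    (hxI : x ∈ I) (hx : x ∈ derivedSeries R L 1) (M : Type*) [AddCommGroup M] [Module R M]
    [Module.Free R M] [Module.Finite R M] [LieRingModule L M] [LieModule R L M] :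
    IsNilpotent (toEnd R L M x) := by
  let A := AlgebraicClosure (FractionRing R)
  have : FaithfulSMul R A := FaithfulSMul.trans R (FractionRing R) A
  have : IsSolvable (I.baseChange A) := isSolvable_baseChange A I
  have hx' : 1 ⊗ₜ[R] x ∈ derivedSeries A (A ⊗[R] L) 1 := by
    rw [derivedSeries_baseChange]
    exact Submodule.tmul_mem_baseChange_of_mem 1 hx
  have nilpotent_baseChange : IsNilpotent (toEnd A (A ⊗[R] L) (A ⊗[R] M) (1 ⊗ₜ x)) :=
    isNilpotent_toEnd_of_mem_of_mem_derivedSeries_one_of_isAlgClosed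
      (I.tmul_mem_baseChange_of_mem (1 : A) hxI) hx' _
  rw [toEnd_baseChange] at nilpotent_baseChange
  have baseChange_injective : Function.Injective (End.baseChangeHom R A M) :=
    LinearMap.baseChangeHom_injective R M A
  exact (IsNilpotent.map_iff baseChange_injective).mp nilpotent_baseChange

end Nilpotent

theorem eigenspace_le_ker_of_isNilpotent {R M : Type*} [CommRing R] [IsDomain R] [AddCommGroup M]
    [Module R M] [Module.IsTorsionFree R M] {f : Module.End R M} (hf : IsNilpotent f) (μ : R) :
    f.eigenspace μ ≤ LinearMap.ker f := by
  by_cases hμ : f.HasEigenvalue μ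
  · rw [(hμ.isNilpotent_of_isNilpotent hf).eq_zero, Module.End.eigenspace_zero]
  · rw [Module.End.hasEigenvalue_iff, not_not] at hμ
    exact hμ ▸ bot_le

theorem stmt2_general {R L : Type*} [CommRing R] [IsDomain R] [CharZero R] [LieRing L]
    [LieAlgebra R L] [Module.Free R L] [IsNoetherian R L]
    (hL : LieAlgebra.derivedSeries R L 1 = ⊤) {s : Submodule R L}
    (hs : Codisjoint s (LieAlgebra.radical R L).toSubmodule)
    (D : LieDerivation R L L) (hDs : ∀ x ∈ s, D x = 0)
    (hDrad : (LieAlgebra.radical R L).toSubmodule ≤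
      ⨆ μ, Module.End.eigenspace (D : L →ₗ[R] L) μ) :
    (∃ x : L, ∀ y, D y = ⁅x, y⁆) ↔ ∀ x ∈ LieAlgebra.radical R L, D x = 0 := by
  constructor
  · rintro ⟨x, hx⟩
    have hxrad : x ∈ LieAlgebra.radical R L :=
      mem_radical_of_lie_eq_zero_of_codisjoint hs fun y hy ↦ by rw [← hx, hDs y hy]
    have hD : (D : L →ₗ[R] L) = LieModule.toEnd R L L x := LinearMap.ext hx
    have hnil : IsNilpotent (D : Module.End R L) :=
      hD ▸ isNilpotent_toEnd_of_mem_of_mem_derivedSeries_one hxrad (hL ▸ LieSubmodule.mem_top x) L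
    exact hDrad.trans (iSup_le (eigenspace_le_ker_of_isNilpotent hnil))
  · intro hrad
    have hker : (⊤ : Submodule R L) ≤ LinearMap.ker (D : L →ₗ[R] L) :=
      hs.eq_top ▸ sup_le hDs hrad
    exact ⟨0, fun y ↦ by rw [zero_lie]; exact hker Submodule.mem_top⟩

/-- a derivation vanishing on `s` and acting as a scalar on each simple module
of the radical is inner iff it vanishes on the radical. -/
theorem stmt2 (g : Type*) [LieRing g] [LieAlgebra ℂ g] [FiniteDimensional ℂ g]
    (hsymp : Symp.IsSympathetic g)
    (s : LieSubalgebra ℂ g) (hs : Symp.IsSimpleLevi g s)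
    (k : ℕ) (V : Fin k → Submodule ℂ g) (hdec : Symp.IsDecomp g s V)
    (D : LieDerivation ℂ g g) (hDs : ∀ x ∈ s, D x = 0)
    (lam : Fin k → ℂ) (hDV : ∀ i, ∀ v ∈ V i, D v = lam i • v) :
    Symp.IsInnerDer D ↔ ∀ x ∈ LieAlgebra.radical ℂ g, D x = 0 :=
  stmt2_general hsymp.2.1 hs.2.codisjoint D hDs <| hdec.2.2.ge.trans <| iSup_le fun i v hv ↦
    Submodule.mem_iSup_of_mem (lam i) (Module.End.mem_eigenspace_iff.mpr (hDV i v hv))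
end
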